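/- arXiv:math/9902059 — 4 statements merged into one kernel-verified Lean document; each statement's English description precedes it below -/
import Mathlib

section
/- Let (V, ω) be a symplectic vector space, let G be a compact subgroup of GL(V), and let ε : G → {±1} be a continuous group homomorphism such that the action of G is sesquisymplectic: ω(gv, gw) = ε(g) ω(v, w) for all g ∈ G and v, w ∈ V. Then there exists a complex structure J on V compatible with ω which is G-invariant in the sense that g ∘ J = ε(g) · (J ∘ g) for every g ∈ G. -/
/-!
Averaging an inner product over Haar measure makes it `G`-invariant. Write `ω v w = ⟪A v, w⟫`. Then
`A` is skew and injective, so `S = -A²` is symmetric and positive definite, and `J = A S^{-1/2}` is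
a complex structure compatible with `ω`: this is the polar decomposition of `A`. Every `g ∈ G`
satisfies `g A = ε(g) A g`, hence commutes with `S` and, as `S^{-1/2}` is a polynomial in `S`, with
`S^{-1/2}` too. Thus `g J = ε(g) J g`.

Writing `S^{-1/2} = R²`, with `R` a polynomial in `S` such that `R⁴ S = 1`, makes positivity
immediate: `ω v (J v) = ⟪A R v, A R v⟫`.
-/

open MeasureTheory Measure Polynomial
open scoped InnerProductSpace

/-- `J` is a complex structure compatible with the bilinear form `ω`, i.e. `J` is an isometry of
`ω` with `J² = -1`, and `ω v (J v)` is positive definite. -/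
structure IsCompatibleComplexStructure {V : Type*} [AddCommGroup V] [Module ℝ V]
    (ω : LinearMap.BilinForm ℝ V) (J : Module.End ℝ V) : Prop where
  apply_apply (v : V) : J (J v) = -v
  map_map (v w : V) : ω (J v) (J w) = ω v w
  pos (v : V) : v ≠ 0 → 0 < ω v (J v)

section FunctionalCalculus

lemma exists_aeval_apply_eq_smul {K V : Type*} [Field K] [AddCommGroup V] [Module K V]
    [FiniteDimensional K V] (T : Module.End K V) (f : K → K) :
    ∃ p : K[X], ∀ (c : K) (v : V), T v = c • v → aeval T p v = f c • v := by
  classical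
  let s : Finset K := T.finite_hasEigenvalue.toFinset
  refine ⟨Lagrange.interpolate s id f, fun c v hv => ?_⟩
  obtain rfl | hv0 := eq_or_ne v 0
  · simp only [map_zero, smul_zero]
  have hvec : T.HasEigenvector c v := ⟨Module.End.mem_eigenspace_iff.2 hv, hv0⟩
  have hc : c ∈ s := T.finite_hasEigenvalue.mem_toFinset.2
    (Module.End.hasEigenvalue_of_hasEigenvector hvec)
  have heval : (Lagrange.interpolate s id f).eval c = f c :=
    Lagrange.eval_interpolate_at_node f Function.injective_id.injOn hc
  rw [Module.End.aeval_apply_of_hasEigenvector hvec, heval]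

lemma commute_aeval_right {R A : Type*} [CommSemiring R] [Semiring A] [Algebra R A] {a b : A}
    (h : Commute a b) (p : R[X]) : Commute a (aeval b p) :=
  Algebra.commute_of_mem_adjoin_singleton_of_commute (aeval_mem_adjoin_singleton R b) h

variable {E : Type*} [NormedAddCommGroup E] [InnerProductSpace ℝ E]

lemma isSymmetric_aeval {T : Module.End ℝ E} (hT : T.IsSymmetric) (p : ℝ[X]) :
    (aeval T p).IsSymmetric := by
  rw [aeval_eq_sum_range]
  exact LinearMap.isSymmetric_sum _ fun n _ => (hT.pow n).smul rfl

lemma exists_aeval_pow_mul_eq_one [FiniteDimensional ℝ E] {S : Module.End ℝ E}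
    (hS : S.IsSymmetric) (hpos : ∀ v, v ≠ 0 → 0 < ⟪S v, v⟫_ℝ) {n : ℕ} (hn : n ≠ 0) :
    ∃ p : ℝ[X], aeval S p ^ n * S = 1 := by
  obtain ⟨p, hp⟩ := exists_aeval_apply_eq_smul S fun c => c⁻¹ ^ (n⁻¹ : ℝ)
  let b := hS.eigenvectorBasis rfl
  let c := hS.eigenvalues rfl
  have hb (i) : S (b i) = c i • b i := hS.apply_eigenvectorBasis rfl i
  have hc (i) : 0 < c i := by
    simpa [hb, inner_smul_left] using hpos (b i) (b.orthonormal.ne_zero i)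
  have hpow (i) (k : ℕ) : (aeval S p ^ k) (b i) = ((c i)⁻¹ ^ (n⁻¹ : ℝ)) ^ k • b i := by
    induction k with
    | zero => simp
    | succ k ih => rw [pow_succ', Module.End.mul_apply, ih, map_smul, hp _ _ (hb i), smul_smul,
        pow_succ]
  refine ⟨p, b.toBasis.ext fun i => ?_⟩
  rw [OrthonormalBasis.coe_toBasis, Module.End.mul_apply, hb, map_smul, hpow,
    Real.rpow_inv_natCast_pow (inv_nonneg.2 (hc i).le) hn, smul_inv_smul₀ (hc i).ne',
    Module.End.one_apply]

end FunctionalCalculus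

section PolarDecomposition

variable {E : Type*} [NormedAddCommGroup E] [InnerProductSpace ℝ E]
  {ω : LinearMap.BilinForm ℝ E} {A : Module.End ℝ E}

lemma exists_inner_apply_eq [FiniteDimensional ℝ E] (ω : LinearMap.BilinForm ℝ E) :
    ∃ A : Module.End ℝ E, ∀ v w, ω v w = ⟪A v, w⟫_ℝ := by
  have hnd : (innerₗ E).Nondegenerate :=
    (LinearMap.IsSymm.isRefl isSymm_inner).nondegenerate_iff_separatingLeft.2 fun v hv =>
      inner_self_eq_zero.1 (hv v)
  exact ⟨ω.symmCompOfNondegenerate (innerₗ E) hnd, fun v w =>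
    (ω.symmCompOfNondegenerate_left_apply hnd w v).symm⟩

lemma inner_apply_left_eq_neg (hω : ω.IsAlt) (hA : ∀ v w, ω v w = ⟪A v, w⟫_ℝ) (v w : E) :
    ⟪A v, w⟫_ℝ = -⟪v, A w⟫_ℝ := by
  rw [← hA, ← hω.neg_eq, hA, real_inner_comm]

lemma inner_neg_sq_apply (hω : ω.IsAlt) (hA : ∀ v w, ω v w = ⟪A v, w⟫_ℝ) (v w : E) :
    ⟪(-A ^ 2) v, w⟫_ℝ = ⟪A v, A w⟫_ℝ := by
  rw [LinearMap.neg_apply, inner_neg_left, sq, Module.End.mul_apply,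
    inner_apply_left_eq_neg hω hA, neg_neg]

lemma isCompatibleComplexStructure_mul_sq (hω : ω.IsAlt) (hA : ∀ v w, ω v w = ⟪A v, w⟫_ℝ)
    {R : Module.End ℝ E} (hR : R.IsSymmetric) (hAR : Commute A R) (h : R ^ 4 * -A ^ 2 = 1) :
    IsCompatibleComplexStructure ω (A * R ^ 2) := by
  have hskew := inner_apply_left_eq_neg hω hA
  have hJJ : A * R ^ 2 * (A * R ^ 2) = -1 := by
    rw [← h, mul_neg, neg_neg, (hAR.pow_right 2).symm.mul_mul_mul_comm, ← sq, ← pow_add,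
      (hAR.pow_pow 2 4).eq]
  have hAJ : A * (A * R ^ 2) = R ^ 2 * (A * A) := by
    rw [← mul_assoc, ((hAR.mul_left hAR).pow_right 2).eq]
  have hJω (v w : E) : ω ((A * R ^ 2) v) w = -ω v ((A * R ^ 2) w) := calc
    ω ((A * R ^ 2) v) w = ⟪(A * (A * R ^ 2)) v, w⟫_ℝ := hA _ _
    _ = ⟪(R ^ 2) ((A * A) v), w⟫_ℝ := by rw [hAJ, Module.End.mul_apply]
    _ = ⟪A (A v), (R ^ 2) w⟫_ℝ := hR.pow 2 _ _
    _ = -ω v ((A * R ^ 2) w) := by rw [hskew, hA, Module.End.mul_apply]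
  have hJ (v : E) : (A * R ^ 2) v = R (A (R v)) := by
    rw [sq, ← mul_assoc, hAR.eq, mul_assoc, Module.End.mul_apply, Module.End.mul_apply]
  refine ⟨LinearMap.congr_fun hJJ, fun v w => ?_, fun v hv => ?_⟩
  · rw [hJω, ← Module.End.mul_apply (A * R ^ 2), hJJ, LinearMap.neg_apply, Module.End.one_apply,
      map_neg, neg_neg]
  · have hARv : A (R v) ≠ 0 := fun h0 => hv <| neg_eq_zero.1 <| by
      rw [← Module.End.one_apply (R := ℝ) v, ← LinearMap.neg_apply, ← hJJ, Module.End.mul_apply,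
        hJ v, h0, map_zero, map_zero]
    calc 0 < ⟪A (R v), A (R v)⟫_ℝ := real_inner_self_pos.2 hARv
      _ = ω v ((A * R ^ 2) v) := by
        rw [hA, hJ, ← hR, ← Module.End.mul_apply R, ← hAR.eq, Module.End.mul_apply]

lemma mul_eq_smul_mul_of_map_map [FiniteDimensional ℝ E] (hA : ∀ v w, ω v w = ⟪A v, w⟫_ℝ)
    {g : Module.End ℝ E} {e : ℝ} (he : e * e = 1) (hg : ∀ v w, ⟪g v, g w⟫_ℝ = ⟪v, w⟫_ℝ)
    (hgω : ∀ v w, ω (g v) (g w) = e * ω v w) : g * A = e • (A * g) := by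
  have hsurj : Function.Surjective g :=
    LinearMap.injective_iff_surjective.1 (g.isometryOfInner hg).injective
  ext v
  refine ext_inner_right ℝ fun u => ?_
  obtain ⟨w, rfl⟩ := hsurj u
  calc ⟪g (A v), g w⟫_ℝ = e * (e * ω v w) := by rw [hg, ← hA, ← mul_assoc, he, one_mul]
    _ = ⟪e • A (g v), g w⟫_ℝ := by rw [← hgω, hA, real_inner_smul_left]

theorem exists_isCompatibleComplexStructure_forall_mul_eq [FiniteDimensional ℝ E]
    (hω : ω.IsAlt) (hnd : ω.SeparatingLeft) :
    ∃ J, IsCompatibleComplexStructure ω J ∧ ∀ (g : Module.End ℝ E) (e : ℝ), e * e = 1 →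
      (∀ v w, ⟪g v, g w⟫_ℝ = ⟪v, w⟫_ℝ) → (∀ v w, ω (g v) (g w) = e * ω v w) →
      g * J = e • (J * g) := by
  obtain ⟨A, hA⟩ := exists_inner_apply_eq ω
  have hinner := inner_neg_sq_apply hω hA
  have hsymm : (-A ^ 2).IsSymmetric := fun v w => by
    rw [hinner, real_inner_comm, ← hinner, real_inner_comm]
  have hpos : ∀ v, v ≠ 0 → 0 < ⟪(-A ^ 2) v, v⟫_ℝ := fun v hv => by
    rw [hinner]
    exact real_inner_self_pos.2 fun h0 => hv <| hnd v fun w => by rw [hA, h0, inner_zero_left]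
  obtain ⟨p, hp⟩ := exists_aeval_pow_mul_eq_one hsymm hpos four_ne_zero
  refine ⟨A * aeval (-A ^ 2) p ^ 2, isCompatibleComplexStructure_mul_sq hω hA
    (isSymmetric_aeval hsymm p) (commute_aeval_right ((Commute.refl A).pow_right 2).neg_right p) hp,
    fun g e he hg hgω => ?_⟩
  have hgA : g * A = e • (A * g) := mul_eq_smul_mul_of_map_map hA he hg hgω
  have hgS : Commute g (-A ^ 2) := by
    refine Commute.neg_right ?_
    rw [Commute, SemiconjBy, sq, ← mul_assoc, hgA, smul_mul_assoc, mul_assoc, hgA, mul_smul_comm,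
      smul_smul, he, one_smul, mul_assoc]
  rw [← mul_assoc, hgA, smul_mul_assoc, mul_assoc, ((commute_aeval_right hgS p).pow_right 2).eq,
    mul_assoc]

end PolarDecomposition

section Averaging

variable {G V : Type*} [Group G] [TopologicalSpace G] [IsTopologicalGroup G]
  [AddCommGroup V] [Module ℝ V] [TopologicalSpace V] [IsTopologicalAddGroup V]
  [ContinuousSMul ℝ V] [T2Space V] [FiniteDimensional ℝ V]

lemma continuous_inner_toEuclidean {ρ : Representation ℝ G V}
    (hρ : ∀ v, Continuous fun g => ρ g v) (v w : V) :
    Continuous fun g => ⟪toEuclidean (ρ g⁻¹ v), toEuclidean (ρ g⁻¹ w)⟫_ℝ :=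
  (toEuclidean.continuous.comp ((hρ v).comp continuous_inv)).inner
    (toEuclidean.continuous.comp ((hρ w).comp continuous_inv))

variable [MeasurableSpace G]

/-- The average over `μ` of the `ρ`-translates of a Euclidean inner product on `V`. Acting through
inverses turns left invariance of `μ` into `ρ`-invariance of the average. -/
noncomputable def averagedInner (ρ : Representation ℝ G V) (μ : Measure G) (v w : V) : ℝ :=
  ∫ g, ⟪toEuclidean (ρ g⁻¹ v), toEuclidean (ρ g⁻¹ w)⟫_ℝ ∂μ

lemma averagedInner_map_map [BorelSpace G] (ρ : Representation ℝ G V) (μ : Measure G)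
    [μ.IsMulLeftInvariant] (h : G) (v w : V) :
    averagedInner ρ μ (ρ h v) (ρ h w) = averagedInner ρ μ v w := by
  have htranslate (g : G) (u : V) : ρ g⁻¹ (ρ h u) = ρ (h⁻¹ * g)⁻¹ u := by
    rw [mul_inv_rev, inv_inv, map_mul, Module.End.mul_apply]
  simp only [averagedInner, htranslate]
  exact integral_mul_left_eq_self
    (fun g => ⟪toEuclidean (ρ g⁻¹ v), toEuclidean (ρ g⁻¹ w)⟫_ℝ) h⁻¹

variable [CompactSpace G] [BorelSpace G]

lemma averagedInner_self_pos {ρ : Representation ℝ G V} (hρ : ∀ v, Continuous fun g => ρ g v)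
    (μ : Measure G) [IsFiniteMeasureOnCompacts μ] [μ.IsOpenPosMeasure] {v : V} (hv : v ≠ 0) :
    0 < averagedInner ρ μ v v := by
  refine (continuous_inner_toEuclidean hρ v v).integral_pos_of_hasCompactSupport_nonneg_nonzero
    (x := 1) (.of_compactSpace _) (fun _ => real_inner_self_nonneg) ?_
  simpa using hv

/-- The average `averagedInner ρ μ` as an inner product on `V`, bundled without a norm so that the
topology of `V` is left alone. -/
@[reducible]
noncomputable def averagedInnerCore {ρ : Representation ℝ G V}
    (hρ : ∀ v, Continuous fun g => ρ g v) (μ : Measure G) [IsFiniteMeasureOnCompacts μ]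
    [μ.IsOpenPosMeasure] : InnerProductSpace.Core ℝ V where
  inner := averagedInner ρ μ
  conj_inner_symm v w := integral_congr_ae <| .of_forall fun g => real_inner_comm _ _
  re_inner_nonneg v := integral_nonneg fun g => real_inner_self_nonneg
  add_left u v w := by
    simp only [averagedInner, map_add, inner_add_left]
    exact integral_add
      ((continuous_inner_toEuclidean hρ u w).integrable_of_hasCompactSupport (.of_compactSpace _))
      ((continuous_inner_toEuclidean hρ v w).integrable_of_hasCompactSupport (.of_compactSpace _))
  smul_left v w c := by
    simp only [averagedInner, map_smul, real_inner_smul_left, integral_const_mul]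
    rfl
  definite v hv := by
    by_contra hne
    exact (averagedInner_self_pos hρ μ hne).ne' hv

end Averaging

theorem exists_invariant_innerProductSpaceCore {G V : Type*} [Group G] [TopologicalSpace G]
    [IsTopologicalGroup G] [CompactSpace G] [AddCommGroup V] [Module ℝ V] [TopologicalSpace V]
    [IsTopologicalAddGroup V] [ContinuousSMul ℝ V] [T2Space V] [FiniteDimensional ℝ V]
    {ρ : Representation ℝ G V} (hρ : ∀ v, Continuous fun g => ρ g v) :
    ∃ c : InnerProductSpace.Core ℝ V, ∀ g v w, c.inner (ρ g v) (ρ g w) = c.inner v w := by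
  borelize G
  exact ⟨averagedInnerCore hρ haar, averagedInner_map_map ρ haar⟩

theorem stmt3_general {G V : Type*} [Group G] [TopologicalSpace G] [IsTopologicalGroup G]
    [CompactSpace G] [AddCommGroup V] [Module ℝ V] [TopologicalSpace V] [IsTopologicalAddGroup V]
    [ContinuousSMul ℝ V] [T2Space V] [FiniteDimensional ℝ V] {ρ : Representation ℝ G V}
    (hρ : ∀ v, Continuous fun g => ρ g v) {ω : LinearMap.BilinForm ℝ V} (hω : ω.IsAlt)
    (hnd : ω.SeparatingLeft) {ε : G → ℝ} (hε : ∀ g, ε g = 1 ∨ ε g = -1)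
    (hsesq : ∀ g v w, ω (ρ g v) (ρ g w) = ε g * ω v w) :
    ∃ J, IsCompatibleComplexStructure ω J ∧ ∀ g, ρ g * J = ε g • (J * ρ g) := by
  obtain ⟨c, hc⟩ := exists_invariant_innerProductSpaceCore hρ
  let _ : NormedAddCommGroup V := c.toNormedAddCommGroup
  let _ : InnerProductSpace ℝ V := .ofCore c.toCore
  obtain ⟨J, hJ, hJg⟩ := exists_isCompatibleComplexStructure_forall_mul_eq hω hnd
  exact ⟨J, hJ, fun g => hJg (ρ g) (ε g) (mul_self_eq_one_iff.2 (hε g)) (hc g) (hsesq g)⟩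

section LinearGroup

variable {V : Type*} [NormedAddCommGroup V] [NormedSpace ℝ V]

/-- The action of a group of continuous linear automorphisms of `V` on `V`, as a
representation. -/
def tautologicalRepresentation (G : Subgroup (V →L[ℝ] V)ˣ) : Representation ℝ G V :=
  ContinuousLinearMap.toLinearMapRingHom.toMonoidHom.comp ((Units.coeHom _).comp G.subtype)

lemma continuous_tautologicalRepresentation_apply (G : Subgroup (V →L[ℝ] V)ˣ) (v : V) :
    Continuous fun g => tautologicalRepresentation G g v :=
  (Units.continuous_val.comp continuous_subtype_val).clm_apply continuous_const

end LinearGroup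

/-- If a compact subgroup `G` of `GL(V)` acts sesquisymplectically on the
symplectic vector space `(V, ω)` relative to a continuous character `ε : G → {±1}`, then there
exists an `ω`-compatible complex structure `J` on `V` with `g ∘ J = ε(g) · (J ∘ g)` for all
`g ∈ G`. -/
theorem stmt3 {V : Type*} [NormedAddCommGroup V] [NormedSpace ℝ V] [FiniteDimensional ℝ V]
    (ω : V →ₗ[ℝ] V →ₗ[ℝ] ℝ)
    (halt : ∀ v, ω v v = 0)
    (hnd : ∀ v, (∀ w, ω v w = 0) → v = 0)
    (G : Subgroup (V →L[ℝ] V)ˣ)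
    (hG : IsCompact (G : Set (V →L[ℝ] V)ˣ))
    (ε : G → ℝ) (hεcont : Continuous ε)
    (hεmul : ∀ g h : G, ε (g * h) = ε g * ε h)
    (hεval : ∀ g : G, ε g = 1 ∨ ε g = -1)
    (hsesq : ∀ (g : G) (v w : V),
      ω (((g : (V →L[ℝ] V)ˣ) : V →L[ℝ] V) v) (((g : (V →L[ℝ] V)ˣ) : V →L[ℝ] V) w)
        = ε g * ω v w) :
    ∃ J : V →ₗ[ℝ] V, (∀ v, J (J v) = - v) ∧
      (∀ v w, ω (J v) (J w) = ω v w) ∧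
      (∀ v, v ≠ 0 → 0 < ω v (J v)) ∧
      (∀ (g : G) (v : V),
        ((g : (V →L[ℝ] V)ˣ) : V →L[ℝ] V) (J v)
          = ε g • J (((g : (V →L[ℝ] V)ˣ) : V →L[ℝ] V) v)) := by
  have : CompactSpace G := isCompact_iff_compactSpace.1 hG
  obtain ⟨J, hJ, hJg⟩ := stmt3_general (continuous_tautologicalRepresentation_apply G) halt hnd
    hεval hsesq
  exact ⟨J, hJ.apply_apply, hJ.map_map, hJ.pos, fun g => LinearMap.congr_fun (hJg g)⟩
end

section
/- Let (V, ω) be a symplectic vector space. For a positive-definite inner product β on V let A_β be the unique linear endomorphism of V with ω(v, w) = β(A_β v, w) for all v, w; A_β is β-skew-adjoint and invertible, −A_β² is β-self-adjoint and positive-definite, and, with P the unique β-positive-definite square root of −A_β², the endomorphism π(β) := P⁻¹ ∘ A_β is a complex structure compatible with ω. Moreover π is a left inverse of the map ι sending a compatible complex structure J to the inner product ι(J) = ω(·, J·), i.e. π(ι(J)) = J for every compatible J; and both maps are equivariant: for any linear automorphism g of V with ω(gv, gw) = ε ω(v, w) for a sign ε ∈ {±1}, one has ι(ε · gJg⁻¹)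 = ι(J)(g⁻¹·, g⁻¹·) for every compatible J, and π(β(g⁻¹·, g⁻¹·)) = ε · g π(β) g⁻¹ for every inner product β. -/
/-!
Everything rests on a trace argument: if `S` is positive definite, `D` is self-adjoint and
`S * D = -(D * S)`, then `tr (D * S * D) = -tr (D * S * D)` vanishes, whereas in a `β`-orthogonal
basis it is a sum of the nonnegative terms `β (S D e) (D e) / β e e`; so `D = 0`. Taking
`S = P + Q` and `D = P - Q` makes positive square roots unique, and taking `S = P` and
`D = P * A - A * P` makes a positive square root of `-A²` commute with the skew-adjoint `A`. Hence
`(P⁻¹ A)² = P⁻² A² = -1`, and uniqueness of the square root transports `P` along automorphisms.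
No square root has to be constructed, so any ordered field may replace `ℝ`.
-/

open LinearMap (BilinForm)

section Defs

variable {K V : Type*} [Field K] [LinearOrder K] [AddCommGroup V] [Module K V]

/-- Positive definiteness of a bilinear form, without symmetry. An endomorphism `P` is positive
definite with respect to `β` when `β ∘ₗ P` is. -/
def IsPosDef (β : BilinForm K V) : Prop :=
  ∀ v, v ≠ 0 → 0 < β v v

/-- `P` is a square root of `T` that is self-adjoint and positive definite for `β`. -/
structure IsPosSqrt (β : BilinForm K V) (T P : Module.End K V) : Prop where
  isSelfAdjoint : β.IsSelfAdjoint P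
  isPosDef : IsPosDef (β ∘ₗ P)
  mul_self : P * P = T

/-- `J` is a complex structure compatible with `ω`; the associated inner product `ι(J)` is
`ω.compl₂ J`. -/
structure IsCompatible (ω : BilinForm K V) (J : Module.End K V) : Prop where
  mul_self : J * J = -1
  apply_apply : ∀ v w, ω (J v) (J w) = ω v w
  pos : ∀ v, v ≠ 0 → 0 < ω v (J v)

end Defs

section Trace

variable {K V : Type*} [Field K] [AddCommGroup V] [Module K V]

lemma trace_eq_sum_div_of_isOrthoᵢ {ι : Type*} [Fintype ι] {β : BilinForm K V}
    {b : Module.Basis ι K V} (hb : β.IsOrthoᵢ b) (hne : ∀ i, β (b i) (b i) ≠ 0)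
    (T : Module.End K V) :
    LinearMap.trace K V T = ∑ i, β (T (b i)) (b i) / β (b i) (b i) := by
  classical
  have apply_basis (v : V) (i : ι) : β v (b i) = b.repr v i * β (b i) (b i) := by
    conv_lhs => rw [← b.sum_repr v]
    rw [map_sum, LinearMap.sum_apply, Finset.sum_eq_single i]
    · simp
    · intro j _ hji
      simp [LinearMap.isOrthoᵢ_def.mp hb j i hji]
    · simp
  rw [LinearMap.trace_eq_matrix_trace K b, Matrix.trace]
  refine Finset.sum_congr rfl fun i _ ↦ ?_
  rw [Matrix.diag_apply, LinearMap.toMatrix_apply, apply_basis, mul_div_cancel_right₀ _ (hne i)]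

variable [LinearOrder K] [IsStrictOrderedRing K] [FiniteDimensional K V]
  {β : BilinForm K V} {S D : Module.End K V}

lemma trace_mul_mul_self_pos (hβsymm : β.IsSymm) (hβ : IsPosDef β) (hS : IsPosDef (β ∘ₗ S))
    (hD : β.IsSelfAdjoint D) (hD₀ : D ≠ 0) : 0 < LinearMap.trace K V (D * S * D) := by
  let _ : Invertible (2 : K) := invertibleOfNonzero two_ne_zero
  obtain ⟨b, hb⟩ :=
    BilinForm.exists_orthogonal_basis (BilinForm.isSymm_iff.mp hβsymm)
  have hb_pos (i) : 0 < β (b i) (b i) := hβ _ (b.ne_zero i)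
  have hterm (i) : β ((D * S * D) (b i)) (b i) = β (S (D (b i))) (D (b i)) := hD _ _
  obtain ⟨j, hj⟩ : ∃ j, D (b j) ≠ 0 := by
    by_contra! h
    exact hD₀ (b.ext h)
  rw [trace_eq_sum_div_of_isOrthoᵢ hb fun i ↦ (hb_pos i).ne']
  refine Finset.sum_pos' (fun i _ ↦ ?_) ⟨j, Finset.mem_univ j, ?_⟩
  · rw [hterm]
    rcases eq_or_ne (D (b i)) 0 with h | h
    · simp [h]
    · exact (div_pos (hS _ h) (hb_pos i)).le
  · rw [hterm]
    exact div_pos (hS _ hj) (hb_pos j)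

lemma eq_zero_of_mul_eq_neg_mul (hβsymm : β.IsSymm) (hβ : IsPosDef β) (hS : IsPosDef (β ∘ₗ S))
    (hD : β.IsSelfAdjoint D) (hSD : S * D = -(D * S)) : D = 0 := by
  by_contra hD₀
  have htrace : LinearMap.trace K V (D * S * D) = -LinearMap.trace K V (D * S * D) :=
    calc LinearMap.trace K V (D * S * D)
      _ = -LinearMap.trace K V (D * (D * S)) := by rw [mul_assoc, hSD, mul_neg, map_neg]
      _ = -LinearMap.trace K V (D * S * D) := by rw [LinearMap.trace_mul_comm]
  have hpos := trace_mul_mul_self_pos hβsymm hβ hS hD hD₀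
  linarith

end Trace

section Form

variable {K V : Type*} [Field K] [AddCommGroup V] [Module K V]
  {β : BilinForm K V} {A : Module.End K V}

lemma IsPosDef.injective [LinearOrder K] (hβ : IsPosDef β) : Function.Injective β :=
  (injective_iff_map_eq_zero β).mpr fun v hv ↦ by
    by_contra hv₀
    simpa [hv] using hβ v hv₀

lemma isSkewAdjoint_of_isAlt (hβsymm : β.IsSymm) (hω : (β ∘ₗ A).IsAlt) : β.IsSkewAdjoint A :=
  fun v w ↦
    calc β (A v) w
      _ = -β (A w) v := (hω.neg w v).symm
      _ = β v (-A w) := by rw [hβsymm.eq, map_neg]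

lemma bijective_of_separatingLeft_comp [FiniteDimensional K V] (hω : (β ∘ₗ A).SeparatingLeft) :
    Function.Bijective A := by
  have hinj : Function.Injective A :=
    (injective_iff_map_eq_zero A).mpr fun v hv ↦ hω v fun w ↦ by simp [hv]
  exact ⟨hinj, LinearMap.injective_iff_surjective.mp hinj⟩

lemma isPosDef_neg_mul_self [LinearOrder K] [IsStrictOrderedRing K] (hβ : IsPosDef β)
    (hA : β.IsSkewAdjoint A) (hA_inj : Function.Injective A) : IsPosDef (β ∘ₗ (-(A * A))) := by
  intro v hv
  have hAv : A v ≠ 0 := (map_ne_zero_iff A hA_inj).mpr hv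
  calc 0
    _ < β (A v) (A v) := hβ _ hAv
    _ = -β (A (A v)) v := by rw [hA (A v) v, Pi.neg_apply, map_neg, neg_neg]
    _ = (β ∘ₗ (-(A * A))) v v := by simp

end Form

section Sqrt

variable {K V : Type*} [Field K] [LinearOrder K] [AddCommGroup V] [Module K V]
  {β : BilinForm K V}

lemma IsPosSqrt.conj {W : Type*} [AddCommGroup W] [Module K W] {g : V ≃ₗ[K] W}
    {T P : Module.End K W} (hP : IsPosSqrt (BilinForm.congr g β) T P) :
    IsPosSqrt β (g.symm.conjAlgEquiv K T) (g.symm.conjAlgEquiv K P) where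
  isSelfAdjoint v w := by simpa using hP.isSelfAdjoint (g v) (g w)
  isPosDef v hv := by simpa using hP.isPosDef (g v) (g.map_ne_zero_iff.mpr hv)
  mul_self := by rw [← map_mul, hP.mul_self]

variable [IsStrictOrderedRing K] [FiniteDimensional K V] {T A P Q : Module.End K V}

lemma IsPosSqrt.unique (hβsymm : β.IsSymm) (hβ : IsPosDef β)
    (hP : IsPosSqrt β T P) (hQ : IsPosSqrt β T Q) : P = Q := by
  have hS : IsPosDef (β ∘ₗ (P + Q)) := fun v hv ↦ by
    simpa using add_pos (hP.isPosDef v hv) (hQ.isPosDef v hv)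
  have hD : β.IsSelfAdjoint (P - Q) := fun v w ↦ by
    simp [hP.isSelfAdjoint v w, hQ.isSelfAdjoint v w]
  have hSD : (P + Q) * (P - Q) = -((P - Q) * (P + Q)) := by
    simp only [add_mul, mul_add, mul_sub, sub_mul, hP.mul_self, hQ.mul_self]
    abel
  exact sub_eq_zero.mp (eq_zero_of_mul_eq_neg_mul hβsymm hβ hS hD hSD)

lemma IsPosSqrt.commute (hβsymm : β.IsSymm) (hβ : IsPosDef β) (hA : β.IsSkewAdjoint A)
    (hP : IsPosSqrt β T P) (hTA : Commute T A) : Commute P A := by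
  have hD : β.IsSelfAdjoint (P * A - A * P) := fun v w ↦ by
    have hPA : β (P (A v)) w = -β v (A (P w)) := by
      rw [hP.isSelfAdjoint, hA, Pi.neg_apply, map_neg]
    have hAP : β (A (P v)) w = -β v (P (A w)) := by
      rw [hA, hP.isSelfAdjoint, Pi.neg_apply, map_neg, map_neg]
    simp only [LinearMap.sub_apply, Module.End.mul_apply, map_sub, hPA, hAP]
    ring
  have hPD : P * (P * A - A * P) = -((P * A - A * P) * P) := by
    have hPPA : P * P * A = A * (P * P) := by rw [hP.mul_self, hTA.eq]
    calc P * (P * A - A * P)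
      _ = P * P * A - P * A * P := by noncomm_ring
      _ = -((P * A - A * P) * P) := by rw [hPPA]; noncomm_ring
  exact sub_eq_zero.mp (eq_zero_of_mul_eq_neg_mul hβsymm hβ hP.isPosDef hD hPD)

end Sqrt

section Units

variable {R : Type*} [Ring R]

lemma inv_mul_mul_inv_mul_eq_neg_one {p : Rˣ} {a : R} (hcomm : Commute (p : R) a)
    (hsq : (p * p : R) = -(a * a)) : (↑p⁻¹ * a) * (↑p⁻¹ * a) = -1 :=
  calc (↑p⁻¹ * a) * (↑p⁻¹ * a)
    _ = ↑p⁻¹ * (a * ↑p⁻¹) * a := by simp only [mul_assoc]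
    _ = ↑p⁻¹ * (↑p⁻¹ * a) * a := by rw [hcomm.units_inv_left.eq]
    _ = -(↑p⁻¹ * (↑p⁻¹ * (p * p))) := by rw [hsq]; noncomm_ring
    _ = -1 := by simp

end Units

section Polar

variable {K V : Type*} [Field K] [LinearOrder K] [IsStrictOrderedRing K] [AddCommGroup V]
  [Module K V] [FiniteDimensional K V] {β : BilinForm K V} {A : Module.End K V}
  {P : (Module.End K V)ˣ}

theorem IsPosSqrt.isCompatible_inv_mul (hβsymm : β.IsSymm) (hβ : IsPosDef β)
    (hA : β.IsSkewAdjoint A) (hP : IsPosSqrt β (-(A * A)) P) :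
    IsCompatible (β ∘ₗ A) (↑P⁻¹ * A) := by
  set J : Module.End K V := ↑P⁻¹ * A
  have hTA : Commute (-(A * A)) A := ((Commute.refl A).mul_left (Commute.refl A)).neg_left
  have hJJ : J * J = -1 :=
    inv_mul_mul_inv_mul_eq_neg_one (hP.commute hβsymm hβ hA hTA) hP.mul_self
  have hJJ_apply (v : V) : J (J v) = -v := LinearMap.congr_fun hJJ v
  have hPJ (v : V) : P.val (J v) = A v := LinearMap.congr_fun (P.mul_inv_cancel_left A) v
  have hJ₀ {v : V} (hv : v ≠ 0) : J v ≠ 0 := fun h ↦ hv <| by simpa [h] using hJJ_apply v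
  refine ⟨hJJ, fun v w ↦ ?_, fun v hv ↦ ?_⟩
  · calc β (A (J v)) (J w)
      _ = -β (P.val v) (J w) := by
        rw [← hPJ (J v), hJJ_apply, map_neg, map_neg, LinearMap.neg_apply]
      _ = -β v (A w) := by rw [hP.isSelfAdjoint, hPJ]
      _ = β (A v) w := by rw [hA v w, Pi.neg_apply, map_neg]
  · calc 0
      _ < β (P.val (J v)) (J v) := hP.isPosDef _ (hJ₀ hv)
      _ = β (A v) (J v) := by rw [hPJ]

theorem IsPosSqrt.inv_mul_eq_of_isCompatible (hβsymm : β.IsSymm) (hβ : IsPosDef β)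
    (hP : IsPosSqrt β (-(A * A)) P) {J : Module.End K V} (hJ : IsCompatible (β ∘ₗ A) J)
    (hβJ : β = (β ∘ₗ A).compl₂ J) : ↑P⁻¹ * A = J := by
  have hAJ : A = J := LinearMap.ext fun v ↦ hβ.injective <| LinearMap.ext fun w ↦
    calc β (A v) w
      _ = β (A (J v)) (J w) := (hJ.apply_apply v w).symm
      _ = β (J v) w := (LinearMap.congr_fun₂ hβJ (J v) w).symm
  have hone : IsPosSqrt β (-(A * A)) 1 :=
    ⟨fun _ _ ↦ rfl, hβ, by rw [hAJ, hJ.mul_self, neg_neg, one_mul]⟩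
  have hP_one : P = 1 := Units.ext (hP.unique hβsymm hβ hone)
  rw [hP_one, inv_one, Units.val_one, one_mul, hAJ]

end Polar

section Equivariance

variable {K V : Type*} [Field K] [AddCommGroup V] [Module K V] {ω β : BilinForm K V}
  {g : V ≃ₗ[K] V} {ε : K}

lemma compl₂_smul_conj (hε : ε * ε = 1) (hg : ∀ v w, ω (g v) (g w) = ε * ω v w)
    (J : Module.End K V) :
    ω.compl₂ (ε • g.conjAlgEquiv K J) = BilinForm.congr g (ω.compl₂ J) :=
  LinearMap.ext₂ fun v w ↦
    calc ω v (ε • g (J (g.symm w)))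
      _ = ε * ω (g (g.symm v)) (g (J (g.symm w))) := by simp
      _ = ω (g.symm v) (J (g.symm w)) := by rw [hg, ← mul_assoc, hε, one_mul]

variable [LinearOrder K] {A A' : Module.End K V}

lemma conj_symm_eq_smul_of_comp_eq (hβ : IsPosDef β)
    (hg : ∀ v w, β (A (g v)) (g w) = ε * β (A v) w)
    (hA' : β ∘ₗ A = BilinForm.congr g β ∘ₗ A') : g.symm.conjAlgEquiv K A' = ε • A :=
  LinearMap.ext fun v ↦ hβ.injective <| LinearMap.ext fun w ↦
    calc β (g.symm (A' (g v))) w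
      _ = BilinForm.congr g β (A' (g v)) (g w) := by simp
      _ = β (A (g v)) (g w) := (LinearMap.congr_fun₂ hA' (g v) (g w)).symm
      _ = β (ε • A v) w := by simp [hg]

theorem IsPosSqrt.inv_mul_eq_smul_conj [IsStrictOrderedRing K] [FiniteDimensional K V]
    {P P' : (Module.End K V)ˣ} (hβsymm : β.IsSymm) (hβ : IsPosDef β)
    (hP : IsPosSqrt β (-(A * A)) P) (hε : ε * ε = 1)
    (hg : ∀ v w, β (A (g v)) (g w) = ε * β (A v) w)
    (hA' : β ∘ₗ A = BilinForm.congr g β ∘ₗ A')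
    (hP' : IsPosSqrt (BilinForm.congr g β) (-(A' * A')) P') :
    ↑P'⁻¹ * A' = ε • g.conjAlgEquiv K (↑P⁻¹ * A) := by
  set φ := g.symm.conjAlgEquiv K
  have hφA : φ A' = ε • A := conj_symm_eq_smul_of_comp_eq hβ hg hA'
  have hφT : φ (-(A' * A')) = -(A * A) := by
    rw [map_neg, map_mul, hφA, smul_mul_smul_comm, hε, one_smul]
  have hφP : φ P' = P := (hφT ▸ hP'.conj).unique hβsymm hβ hP
  have hφJ : φ (↑P'⁻¹ * A') = ε • (↑P⁻¹ * A) := by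
    rw [← mul_smul_comm, Units.eq_inv_mul_iff_mul_eq, ← hφP, ← map_mul,
      P'.mul_inv_cancel_left, hφA]
  rw [← map_smul, ← hφJ]
  exact (φ.symm_apply_apply _).symm

end Equivariance

theorem stmt4_general {K V : Type*} [Field K] [LinearOrder K] [IsStrictOrderedRing K]
    [AddCommGroup V] [Module K V] [FiniteDimensional K V]
    (ω : V →ₗ[K] V →ₗ[K] K)
    (hωalt : ∀ v, ω v v = 0)
    (hωnd : ∀ v, (∀ w, ω v w = 0) → v = 0)
    (β : V →ₗ[K] V →ₗ[K] K)
    (hβsymm : ∀ v w, β v w = β w v)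
    (hβpos : ∀ v, v ≠ 0 → 0 < β v v)
    (A : V →ₗ[K] V) (hA : ∀ v w, ω v w = β (A v) w)
    (P : V →ₗ[K] V)
    (hPsa : ∀ v w, β (P v) w = β v (P w))
    (hPpos : ∀ v, v ≠ 0 → 0 < β (P v) v)
    (hPsq : ∀ v, P (P v) = -A (A v))
    (Pinv : V →ₗ[K] V)
    (hPinv₁ : ∀ v, Pinv (P v) = v) (hPinv₂ : ∀ v, P (Pinv v) = v) :
    (∀ A' : V →ₗ[K] V, (∀ v w, ω v w = β (A' v) w) → A' = A) ∧
    (∀ v w, β (A v) w = -β v (A w)) ∧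
    Function.Bijective A ∧
    (∀ v w, β (A (A v)) w = β v (A (A w))) ∧
    (∀ v, v ≠ 0 → 0 < -β (A (A v)) v) ∧
    (∀ P' : V →ₗ[K] V,
      (∀ v w, β (P' v) w = β v (P' w)) → (∀ v, v ≠ 0 → 0 < β (P' v) v) →
      (∀ v, P' (P' v) = -A (A v)) → P' = P) ∧
    (∀ v, Pinv (A (Pinv (A v))) = -v) ∧
    (∀ v w, ω (Pinv (A v)) (Pinv (A w)) = ω v w) ∧
    (∀ v, v ≠ 0 → 0 < ω v (Pinv (A v))) ∧
    (∀ J₀ : V →ₗ[K] V,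
      (∀ v, J₀ (J₀ v) = -v) → (∀ v w, ω (J₀ v) (J₀ w) = ω v w) →
      (∀ v, v ≠ 0 → 0 < ω v (J₀ v)) → (∀ v w, β v w = ω v (J₀ w)) →
      Pinv ∘ₗ A = J₀) ∧
    (∀ (g : V ≃ₗ[K] V) (ε : K), (ε = 1 ∨ ε = -1) →
      (∀ v w, ω (g v) (g w) = ε * ω v w) →
      ∀ J₀ : V →ₗ[K] V,
        (∀ v, J₀ (J₀ v) = -v) → (∀ v w, ω (J₀ v) (J₀ w) = ω v w) →
        (∀ v, v ≠ 0 → 0 < ω v (J₀ v)) →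
        ∀ v w, ω v (ε • g (J₀ (g.symm w))) = ω (g.symm v) (J₀ (g.symm w))) ∧
    (∀ (g : V ≃ₗ[K] V) (ε : K), (ε = 1 ∨ ε = -1) →
      (∀ v w, ω (g v) (g w) = ε * ω v w) →
      ∀ A' P' Pinv' : V →ₗ[K] V,
        (∀ v w, ω v w = β (g.symm (A' v)) (g.symm w)) →
        (∀ v w, β (g.symm (P' v)) (g.symm w) = β (g.symm v) (g.symm (P' w))) →
        (∀ v, v ≠ 0 → 0 < β (g.symm (P' v)) (g.symm v)) →
        (∀ v, P' (P' v) = -A' (A' v)) →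
        (∀ v, Pinv' (P' v) = v) → (∀ v, P' (Pinv' v) = v) →
        ∀ v, Pinv' (A' v) = ε • g (Pinv (A (g.symm v)))) := by
  obtain rfl : ω = β ∘ₗ A := LinearMap.ext₂ hA
  have hsymm : BilinForm.IsSymm β := ⟨hβsymm⟩
  have hβ : IsPosDef β := hβpos
  have hskew : LinearMap.IsSkewAdjoint β A := isSkewAdjoint_of_isAlt hsymm hωalt
  have hbij : Function.Bijective A := bijective_of_separatingLeft_comp hωnd
  let toUnit (Q Qinv : Module.End K V) (h₁ : ∀ v, Qinv (Q v) = v) (h₂ : ∀ v, Q (Qinv v) = v) :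
      (Module.End K V)ˣ := ⟨Q, Qinv, LinearMap.ext h₂, LinearMap.ext h₁⟩
  let U := toUnit P Pinv hPinv₁ hPinv₂
  have hP : IsPosSqrt β (-(A * A)) U := ⟨hPsa, hPpos, LinearMap.ext hPsq⟩
  have hJ : IsCompatible (β ∘ₗ A) (↑U⁻¹ * A) := hP.isCompatible_inv_mul hsymm hβ hskew
  have hsign {ε : K} (hε : ε = 1 ∨ ε = -1) : ε * ε = 1 := mul_self_eq_one_iff.mpr hε
  refine ⟨fun A' hA' ↦ ?_, fun v w ↦ ?_, hbij, fun v w ↦ ?_, ?_, fun P' hsa hpos hsq ↦ ?_,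
    LinearMap.congr_fun hJ.mul_self, hJ.apply_apply, hJ.pos, fun J hJsq hJω hJpos hβJ ↦ ?_,
    fun g ε hε hg J _ _ _ ↦ ?_, fun g ε hε hg A' P' Pinv' hA' hsa hpos hsq hinv₁ hinv₂ ↦ ?_⟩
  · exact LinearMap.ext fun v ↦ hβ.injective <| LinearMap.ext fun w ↦ (hA' v w).symm
  · simpa using hskew v w
  · simp [hskew _ _]
  · simpa [IsPosDef] using isPosDef_neg_mul_self hβ hskew hbij.injective
  · exact IsPosSqrt.unique hsymm hβ ⟨hsa, hpos, LinearMap.ext hsq⟩ hP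
  · exact hP.inv_mul_eq_of_isCompatible hsymm hβ ⟨LinearMap.ext hJsq, hJω, hJpos⟩
      (LinearMap.ext₂ hβJ)
  · exact LinearMap.congr_fun₂ (compl₂_smul_conj (hsign hε) hg J)
  · let U' := toUnit P' Pinv' hinv₁ hinv₂
    have hP' : IsPosSqrt (BilinForm.congr g β) (-(A' * A')) U' :=
      ⟨hsa, hpos, LinearMap.ext hsq⟩
    exact LinearMap.congr_fun <|
      hP.inv_mul_eq_smul_conj hsymm hβ (hsign hε) hg (LinearMap.ext₂ hA') hP'

/-- Construction of a compatible complex structure from an inner product: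
for an inner product `β` on the symplectic vector space `(V, ω)`, the endomorphism `A = A_β`
defined by `ω(v,w) = β(Av, w)` (which is unique) is `β`-skew-adjoint and invertible, `−A²` is
`β`-self-adjoint and positive definite, and for the unique `β`-self-adjoint positive-definite
square root `P` of `−A²`, the endomorphism `π(β) = P⁻¹ ∘ A` is a complex structure compatible
with `ω`.  Moreover `π` is a left inverse of `ι : J ↦ ω(·, J·)`, and both maps are equivariant
for sesquisymplectic automorphisms. -/
theorem stmt4 {V : Type*} [AddCommGroup V] [Module ℝ V] [FiniteDimensional ℝ V]
    (ω : V →ₗ[ℝ] V →ₗ[ℝ] ℝ)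
    (hωalt : ∀ v, ω v v = 0)
    (hωnd : ∀ v, (∀ w, ω v w = 0) → v = 0)
    (β : V →ₗ[ℝ] V →ₗ[ℝ] ℝ)
    (hβsymm : ∀ v w, β v w = β w v)
    (hβpos : ∀ v, v ≠ 0 → 0 < β v v)
    (A : V →ₗ[ℝ] V) (hA : ∀ v w, ω v w = β (A v) w)
    (P : V →ₗ[ℝ] V)
    (hPsa : ∀ v w, β (P v) w = β v (P w))
    (hPpos : ∀ v, v ≠ 0 → 0 < β (P v) v)
    (hPsq : ∀ v, P (P v) = - A (A v))
    (Pinv : V →ₗ[ℝ] V)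
    (hPinv₁ : ∀ v, Pinv (P v) = v) (hPinv₂ : ∀ v, P (Pinv v) = v) :
    -- `A_β` is the unique endomorphism with `ω(v,w) = β(Av,w)`
    (∀ A' : V →ₗ[ℝ] V, (∀ v w, ω v w = β (A' v) w) → A' = A) ∧
    -- `A_β` is `β`-skew-adjoint and invertible
    (∀ v w, β (A v) w = - β v (A w)) ∧
    Function.Bijective A ∧
    -- `−A_β²` is `β`-self-adjoint and positive-definite
    (∀ v w, β (A (A v)) w = β v (A (A w))) ∧
    (∀ v, v ≠ 0 → 0 < - β (A (A v)) v) ∧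
    -- `P` is the unique `β`-self-adjoint positive-definite square root of `−A_β²`
    (∀ P' : V →ₗ[ℝ] V,
      (∀ v w, β (P' v) w = β v (P' w)) → (∀ v, v ≠ 0 → 0 < β (P' v) v) →
      (∀ v, P' (P' v) = - A (A v)) → P' = P) ∧
    -- `π(β) = P⁻¹ ∘ A_β` is a complex structure compatible with `ω`
    (∀ v, Pinv (A (Pinv (A v))) = - v) ∧
    (∀ v w, ω (Pinv (A v)) (Pinv (A w)) = ω v w) ∧
    (∀ v, v ≠ 0 → 0 < ω v (Pinv (A v))) ∧
    -- `π` is a left inverse of `ι`: if `β = ι(J₀) = ω(·, J₀·)` for a compatible `J₀`,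
    -- then `π(β) = J₀`
    (∀ J₀ : V →ₗ[ℝ] V,
      (∀ v, J₀ (J₀ v) = - v) → (∀ v w, ω (J₀ v) (J₀ w) = ω v w) →
      (∀ v, v ≠ 0 → 0 < ω v (J₀ v)) → (∀ v w, β v w = ω v (J₀ w)) →
      Pinv ∘ₗ A = J₀) ∧
    -- equivariance of `ι`: `ι(ε · g J₀ g⁻¹) = ι(J₀)(g⁻¹·, g⁻¹·)`
    (∀ (g : V ≃ₗ[ℝ] V) (ε : ℝ), (ε = 1 ∨ ε = -1) →
      (∀ v w, ω (g v) (g w) = ε * ω v w) →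
      ∀ J₀ : V →ₗ[ℝ] V,
        (∀ v, J₀ (J₀ v) = - v) → (∀ v w, ω (J₀ v) (J₀ w) = ω v w) →
        (∀ v, v ≠ 0 → 0 < ω v (J₀ v)) →
        ∀ v w, ω v (ε • g (J₀ (g.symm w))) = ω (g.symm v) (J₀ (g.symm w))) ∧
    -- equivariance of `π`: `π(β(g⁻¹·, g⁻¹·)) = ε · g ∘ π(β) ∘ g⁻¹`
    (∀ (g : V ≃ₗ[ℝ] V) (ε : ℝ), (ε = 1 ∨ ε = -1) →
      (∀ v w, ω (g v) (g w) = ε * ω v w) →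
      ∀ A' P' Pinv' : V →ₗ[ℝ] V,
        (∀ v w, ω v w = β (g.symm (A' v)) (g.symm w)) →
        (∀ v w, β (g.symm (P' v)) (g.symm w) = β (g.symm v) (g.symm (P' w))) →
        (∀ v, v ≠ 0 → 0 < β (g.symm (P' v)) (g.symm v)) →
        (∀ v, P' (P' v) = - A' (A' v)) →
        (∀ v, Pinv' (P' v) = v) → (∀ v, P' (Pinv' v) = v) →
        ∀ v, Pinv' (A' v) = ε • g (Pinv (A (g.symm v)))) :=
  stmt4_general ω hωalt hωnd β hβsymm hβpos A hA P hPsa hPpos hPsq Pinv hPinv₁ hPinv₂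
end

section
/- Let V be a finite-dimensional real vector space, let σ : V → V be a linear involution, and let S ⊆ V be a finite set such that for every α ∈ S either σ(α) = α or −σ(α) ∈ S. Then the convex cone generated by {α − σ(α) : α ∈ S} (the set of finite nonnegative linear combinations of these vectors) is equal to the intersection of the convex cone generated by S with the (−1)-eigenspace {v ∈ V : σ(v) = −v}. -/
/-- The convex cone generated by a subset `T` of a real vector space: all finite nonnegative
linear combinations of elements of `T` (including `0`, the empty combination). -/
def coneGen {V : Type*} [AddCommGroup V] [Module ℝ V] (T : Set V) : Set V :=
  {v | ∃ (n : ℕ) (c : Fin n → ℝ) (x : Fin n → V),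
    (∀ i, 0 ≤ c i) ∧ (∀ i, x i ∈ T) ∧ v = ∑ i, c i • x i}

theorem coneGen_eq_hull {V : Type*} [AddCommGroup V] [Module ℝ V] (T : Set V) :
    coneGen T = PointedCone.hull ℝ T := by
  ext v
  rw [SetLike.mem_coe, Submodule.mem_span_set']
  constructor
  · rintro ⟨n, c, x, hc, hx, rfl⟩
    exact ⟨n, fun i ↦ ⟨c i, hc i⟩, fun i ↦ ⟨x i, hx i⟩, rfl⟩
  · rintro ⟨n, c, x, rfl⟩
    exact ⟨n, fun i ↦ c i, fun i ↦ x i, fun i ↦ (c i).2, fun i ↦ (x i).2, rfl⟩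

theorem pointedCone_map_hull {R E F : Type*} [Semiring R] [PartialOrder R] [IsOrderedRing R]
    [AddCommMonoid E] [Module R E] [AddCommMonoid F] [Module R F] (f : E →ₗ[R] F) (T : Set E) :
    (PointedCone.hull R T).map f = PointedCone.hull R (f '' T) :=
  Submodule.map_span _ T

theorem sub_apply_mem_eigenspace_neg_one {R M : Type*} [CommRing R] [AddCommGroup M] [Module R M]
    {σ : M →ₗ[R] M} (hσ : Function.Involutive σ) (v : M) :
    v - σ v ∈ Module.End.eigenspace σ (-1) := by
  rw [Module.End.mem_eigenspace_iff, map_sub, hσ v, neg_one_smul, neg_sub]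

theorem sub_mem_hull_of_eq_or_neg_mem {R M : Type*} [Ring R] [PartialOrder R] [IsOrderedRing R]
    [AddCommGroup M] [Module R M] {S : Set M} {x y : M} (hx : x ∈ S) (h : y = x ∨ -y ∈ S) :
    x - y ∈ PointedCone.hull R S := by
  rcases h with rfl | hneg
  · rw [sub_self]
    exact zero_mem _
  · rw [sub_eq_add_neg]
    exact add_mem (PointedCone.subset_hull hx) (PointedCone.subset_hull hneg)

section OrderedField

variable {K V : Type*} [Field K] [LinearOrder K] [IsStrictOrderedRing K] [AddCommGroup V]
  [Module K V] {σ : V →ₗ[K] V}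

theorem pointedCone_map_id_sub_eq_inf_eigenspace (hσ : Function.Involutive σ)
    {C : PointedCone K V} (hC : C.map (LinearMap.id - σ) ≤ C) :
    C.map (LinearMap.id - σ) = C ⊓ PointedCone.ofSubmodule (Module.End.eigenspace σ (-1)) := by
  apply le_antisymm
  · refine le_inf hC ?_
    rintro _ ⟨v, -, rfl⟩
    exact sub_apply_mem_eigenspace_neg_one hσ v
  · rintro v ⟨hvC, hv⟩
    have hσv : σ v = (-1 : K) • v := Module.End.mem_eigenspace_iff.mp hv
    -- On the `(-1)`-eigenspace `(1 - σ) / 2` is the identity, so `v` is the image of `v / 2`.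
    refine ⟨(2⁻¹ : K) • v, C.smul_mem (by positivity) hvC, ?_⟩
    change (2⁻¹ : K) • v - σ ((2⁻¹ : K) • v) = v
    rw [map_smul, hσv]
    module

theorem stmt8_general (hσ : Function.Involutive σ) {S : Set V}
    (hclosed : ∀ α ∈ S, σ α = α ∨ -σ α ∈ S) :
    PointedCone.hull K ((fun α ↦ α - σ α) '' S) =
      PointedCone.hull K S ⊓ PointedCone.ofSubmodule (Module.End.eigenspace σ (-1)) := by
  have hmap := pointedCone_map_hull (LinearMap.id - σ) S
  refine hmap.symm.trans (pointedCone_map_id_sub_eq_inf_eigenspace hσ ?_)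
  rw [hmap, Submodule.span_le]
  rintro _ ⟨α, hα, rfl⟩
  exact sub_mem_hull_of_eq_or_neg_mem hα (hclosed α hα)

end OrderedField

/-- Let `σ` be a linear involution of a finite-dimensional real vector space
`V` and `S ⊆ V` a finite set such that every `α ∈ S` satisfies `σ α = α` or `−σ α ∈ S`.  Then
the convex cone generated by `{α − σ α : α ∈ S}` equals the intersection of the convex cone
generated by `S` with the `(−1)`-eigenspace of `σ`. -/
theorem stmt8 {V : Type*} [AddCommGroup V] [Module ℝ V] [FiniteDimensional ℝ V]
    (σ : V →ₗ[ℝ] V) (hσ : ∀ v, σ (σ v) = v)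
    (S : Set V) (hS : S.Finite)
    (hclosed : ∀ α ∈ S, σ α = α ∨ -σ α ∈ S) :
    coneGen {w | ∃ α ∈ S, w = α - σ α} = coneGen S ∩ {v | σ v = -v} := by
  simpa [coneGen_eq_hull, Set.ext_iff, Set.image, @eq_comm V (_ - _), Module.End.mem_eigenspace_iff]
    using SetLike.ext_iff.mp (stmt8_general hσ hclosed)
end

section
/- Let n ≥ 1 and let λ, μ, ν ∈ ℝⁿ be weakly decreasing n-tuples. Then there exist complex Hermitian n×n matrices A and B with spec(A) = λ, spec(B) = μ and spec(A+B) = ν if and only if there exist real symmetric n×n matrices A and B with spec(A) = λ, spec(B) = μ and spec(A+B) = ν. -/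
/-!
This is a Kempf–Ness argument. With the spectrum of the sum moved to the other side, the Hermitian
matrices become unitary `X c` with `∑ c, (X c)ᴴ * diagonal (α c) * X c = 0`. Such a critical tuple
is semistable for the weights `α`, in every tensor power of `𝕜 ^ n`. Semistability says that
finitely many systems of polynomials do not vanish at `X`, so it also holds at some invertible real
tuple `Y`. The numerical criterion, tested on products of minors of `Y c`, then bounds
`∑ c, logVol (α c) (Y c * H * (Y c)ᵀ)` above over positive definite real `H`. Replacing `Y c * A`,
for a nearly maximising `H = A * Aᵀ`, by its orthogonal part and passing to a limit yields
orthogonal `Q c` for which the supremum is `0`, attained at `H = 1`. The first-order condition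
there, in the direction `M = ∑ c, (Q c)ᵀ * diagonal (α c) * Q c`, reads `trace (M * M) = 0`, hence
`M = 0`.
-/

open Matrix

/-! ### Kronecker products of families of matrices -/

section PiKronecker

variable {κ m R : Type*} [Fintype κ] [CommSemiring R]

/-- The Kronecker product of a family of matrices: the matrix of the tensor product of the
corresponding endomorphisms. A constant family `fun _ => X` gives a tensor power of `X`. -/
def piKronecker (M : κ → Matrix m m R) : Matrix (κ → m) (κ → m) R :=
  of fun i j => ∏ a, M a (i a) (j a)

lemma piKronecker_apply (M : κ → Matrix m m R) (i j : κ → m) :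
    piKronecker M i j = ∏ a, M a (i a) (j a) := rfl

lemma piKronecker_mul [DecidableEq κ] [Fintype m] (M N : κ → Matrix m m R) :
    piKronecker (fun a => M a * N a) = piKronecker M * piKronecker N := by
  ext i j
  simp only [piKronecker_apply, mul_apply, Finset.prod_univ_sum, Fintype.piFinset_univ,
    Finset.prod_mul_distrib]

lemma piKronecker_one [DecidableEq m] : piKronecker (fun _ : κ => (1 : Matrix m m R)) = 1 := by
  ext i j
  simp only [piKronecker_apply, one_apply, Finset.prod_ite_zero, Finset.prod_const_one,
    Finset.mem_univ, true_imp_iff, funext_iff]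

lemma piKronecker_conjTranspose [StarRing R] (M : κ → Matrix m m R) :
    (piKronecker M)ᴴ = piKronecker fun a => (M a)ᴴ := by
  ext i j
  simp only [piKronecker_apply, conjTranspose_apply, star_prod]

lemma piKronecker_map {S : Type*} [CommSemiring S] (f : R →+* S) (M : κ → Matrix m m R) :
    (piKronecker M).map f = piKronecker fun a => (M a).map f := by
  ext i j
  simp only [piKronecker_apply, map_apply, map_prod]

variable [DecidableEq κ]

lemma piKronecker_update_apply (M : κ → Matrix m m R) (a : κ) (N : Matrix m m R) (i j : κ → m) :
    piKronecker (Function.update M a N) i j =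
      N (i a) (j a) * ∏ b ∈ Finset.univ.erase a, M b (i b) (j b) := by
  rw [piKronecker_apply, ← Finset.mul_prod_erase _ _ (Finset.mem_univ a), Function.update_self]
  congr 1
  refine Finset.prod_congr rfl fun b hb => ?_
  rw [Function.update_of_ne (Finset.ne_of_mem_erase hb)]

lemma piKronecker_update_sum {ι : Type*} (M : κ → Matrix m m R) (a : κ) (s : Finset ι)
    (N : ι → Matrix m m R) :
    piKronecker (Function.update M a (∑ c ∈ s, N c)) =
      ∑ c ∈ s, piKronecker (Function.update M a (N c)) := by
  ext i j
  simp only [Matrix.sum_apply, piKronecker_update_apply, Finset.sum_mul]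

lemma diagonal_sum_eq_sum_piKronecker [DecidableEq m] (d : m → R) :
    diagonal (fun i : κ → m => ∑ a, d (i a)) =
      ∑ a, piKronecker (Function.update 1 a (diagonal d)) := by
  ext i j
  simp only [Matrix.sum_apply, piKronecker_update_apply, diagonal_apply, Pi.one_apply, one_apply,
    Finset.prod_ite_zero, Finset.prod_const_one]
  by_cases hij : i = j
  · simp [hij]
  · rw [if_neg hij]
    refine (Finset.sum_eq_zero fun a _ => ?_).symm
    by_cases ha : i a = j a
    · obtain ⟨b, hb⟩ := Function.ne_iff.mp hij
      rw [if_neg (c := ∀ b ∈ _, _), mul_zero]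
      exact fun h => hb (h b (Finset.mem_erase.mpr ⟨by rintro rfl; exact hb ha, Finset.mem_univ b⟩))
    · rw [if_neg ha, zero_mul]

/-- The diagonal of total weights acts on tensors as a derivation, so the moment equation
`∑ c, (X c)ᴴ * diagonal (ω c) * X c = 0` passes to tensor powers. -/
lemma sum_conjTranspose_piKronecker_eq_zero {ι : Type*} [Fintype ι] [Fintype m] [DecidableEq m]
    [StarRing R] (ω : ι → m → R) (X : ι → Matrix m m R) (hX : ∀ c, (X c)ᴴ * X c = 1)
    (hsum : ∑ c, (X c)ᴴ * diagonal (ω c) * X c = 0) :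
    ∑ c, (piKronecker fun _ : κ => X c)ᴴ * diagonal (fun i => ∑ a, ω c (i a)) *
      (piKronecker fun _ : κ => X c) = 0 := by
  have hslot : ∀ c (a : κ), (piKronecker fun _ : κ => X c)ᴴ *
      piKronecker (Function.update 1 a (diagonal (ω c))) * (piKronecker fun _ : κ => X c) =
      piKronecker (Function.update 1 a ((X c)ᴴ * diagonal (ω c) * X c)) := by
    intro c a
    rw [piKronecker_conjTranspose, ← piKronecker_mul, ← piKronecker_mul]
    congr 1
    funext b
    obtain rfl | hb := eq_or_ne b a
    · simp only [Function.update_self]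
    · simp only [Function.update_of_ne hb, Pi.one_apply, mul_one, hX]
  calc _ = ∑ c, ∑ a : κ, piKronecker (Function.update 1 a ((X c)ᴴ * diagonal (ω c) * X c)) :=
        Finset.sum_congr rfl fun c _ => by
          rw [diagonal_sum_eq_sum_piKronecker, Finset.mul_sum, Finset.sum_mul]
          exact Finset.sum_congr rfl fun a _ => hslot c a
    _ = ∑ a : κ, piKronecker (Function.update 1 a (0 : Matrix m m R)) := by
        rw [Finset.sum_comm]
        exact Finset.sum_congr rfl fun a _ => by rw [← piKronecker_update_sum, hsum]
    _ = 0 := Finset.sum_eq_zero fun a _ => by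
        ext i j
        rw [piKronecker_update_apply, Matrix.zero_apply, zero_mul, Matrix.zero_apply]

end PiKronecker

/-! ### Semistability -/

section Semistable

variable {ι J R : Type*} [Fintype ι] [Fintype J]

/-- Numerical semistability of the filtrations of `R^J` cut out by the rows of the `T c`, the
`i`-th row of `T c` having weight `ω c i`: the steps of weights `ω c (t c)`, where `T c *ᵥ w` is
supported on rows of at least that weight, meet only in zero when their weights have positive sum.
-/
def Semistable [NonUnitalNonAssocSemiring R] (ω : ι → J → ℝ) (T : ι → Matrix J J R) : Prop :=
  ∀ t : ι → J, 0 < ∑ c, ω c (t c) →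
    ∀ w : J → R, (∀ c i, ω c i < ω c (t c) → (T c *ᵥ w) i = 0) → w = 0

lemma star_dotProduct_diagonal_mulVec {𝕜 : Type*} [RCLike 𝕜] [DecidableEq J] (d : J → ℝ)
    (v : J → 𝕜) :
    star v ⬝ᵥ diagonal (fun i => (d i : 𝕜)) *ᵥ v = ((∑ i, d i * ‖v i‖ ^ 2 : ℝ) : 𝕜) := by
  simp only [dotProduct, mulVec_diagonal, Pi.star_apply, RCLike.star_def]
  push_cast
  refine Finset.sum_congr rfl fun i _ => ?_
  rw [← RCLike.conj_mul]
  ring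

theorem semistable_of_sum_eq_zero {𝕜 : Type*} [RCLike 𝕜] [DecidableEq J] (ω : ι → J → ℝ)
    (T : ι → Matrix J J 𝕜) (hT : ∀ c, (T c)ᴴ * T c = 1)
    (hsum : ∑ c, (T c)ᴴ * diagonal (fun i => (ω c i : 𝕜)) * T c = 0) : Semistable ω T := by
  intro t ht w hw
  have hquad : ∀ (c : ι) (d : J → ℝ),
      star w ⬝ᵥ ((T c)ᴴ * diagonal (fun i => (d i : 𝕜)) * T c) *ᵥ w =
        ((∑ i, d i * ‖(T c *ᵥ w) i‖ ^ 2 : ℝ) : 𝕜) := fun c d => by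
    rw [← star_dotProduct_diagonal_mulVec, ← mulVec_mulVec, ← mulVec_mulVec, star_mulVec,
      dotProduct_mulVec, dotProduct_mulVec]
  have hnorm : ∀ c, ∑ i, ‖(T c *ᵥ w) i‖ ^ 2 = ∑ i, ‖w i‖ ^ 2 := fun c => by
    have h := hquad c fun _ => 1
    have h' := star_dotProduct_diagonal_mulVec (𝕜 := 𝕜) (fun _ => 1) w
    simp only [RCLike.ofReal_one, diagonal_one, Matrix.mul_one, hT, one_mul] at h h'
    exact RCLike.ofReal_injective (h.symm.trans h')
  have hzero : ∑ c, ∑ i, ω c i * ‖(T c *ᵥ w) i‖ ^ 2 = 0 := by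
    have h := congrArg (fun M => star w ⬝ᵥ M *ᵥ w) hsum
    simp only [sum_mulVec, dotProduct_sum, hquad, zero_mulVec, dotProduct_zero] at h
    exact_mod_cast h
  have hle : (∑ c, ω c (t c)) * ∑ i, ‖w i‖ ^ 2 ≤ 0 :=
    calc (∑ c, ω c (t c)) * ∑ i, ‖w i‖ ^ 2
        = ∑ c, ∑ i, ω c (t c) * ‖(T c *ᵥ w) i‖ ^ 2 := by
          simp only [Finset.sum_mul, ← Finset.mul_sum, hnorm]
      _ ≤ ∑ c, ∑ i, ω c i * ‖(T c *ᵥ w) i‖ ^ 2 := by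
          refine Finset.sum_le_sum fun c _ => Finset.sum_le_sum fun i _ => ?_
          rcases lt_or_ge (ω c i) (ω c (t c)) with hi | hi
          · simp [hw c i hi]
          · exact mul_le_mul_of_nonneg_right hi (sq_nonneg _)
      _ = 0 := hzero
  have hw0 : ∑ i, ‖w i‖ ^ 2 = 0 :=
    (nonpos_of_mul_nonpos_right hle ht).antisymm (Finset.sum_nonneg fun _ _ => sq_nonneg _)
  ext i
  have hi := (Finset.sum_eq_zero_iff_of_nonneg fun _ _ => sq_nonneg _).mp hw0 i (Finset.mem_univ i)
  exact norm_eq_zero.mp (pow_eq_zero_iff two_ne_zero |>.mp hi)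

lemma Semistable.of_map [NonAssocSemiring R] {S : Type*} [NonAssocSemiring S] {f : R →+* S}
    (hf : Function.Injective f) {ω : ι → J → ℝ} {T : ι → Matrix J J R}
    (h : Semistable ω fun c => (T c).map f) : Semistable ω T := by
  intro t ht w hw
  have hfw : f ∘ w = 0 := h t ht _ fun c i hi => by
    rw [← RingHom.map_mulVec, hw c i hi, map_zero]
  funext j
  exact (map_eq_zero_iff f hf).mp (congrFun hfw j)

end Semistable

section Zariski

open MvPolynomial

variable {ι J σ K : Type*} [Fintype ι] [Fintype J] [Field K]

lemma exists_eval_ne_zero_of_mulVec_injective {I : Type*} [Finite I]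
    (M : Matrix I J (MvPolynomial σ K)) (x₀ : σ → K)
    (hinj : ∀ w, M.map (eval x₀) *ᵥ w = 0 → w = 0) :
    ∃ D : MvPolynomial σ K, eval x₀ D ≠ 0 ∧
      ∀ x, eval x D ≠ 0 → ∀ w, M.map (eval x) *ᵥ w = 0 → w = 0 := by
  classical
  have := Fintype.ofFinite I
  obtain ⟨g, hg⟩ := LinearMap.exists_leftInverse_of_injective (toLin' (M.map (eval x₀)))
    (LinearMap.ker_eq_bot'.mpr fun w hw => hinj w (by simpa using hw))
  -- The polynomial is `det (L * M)` for a constant left inverse `L` of `M` at `x₀`.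
  obtain ⟨L, hL⟩ : ∃ L : Matrix J I K, L * M.map (eval x₀) = 1 :=
    ⟨LinearMap.toMatrix' g, by
      simpa [LinearMap.toMatrix'_comp] using congrArg LinearMap.toMatrix' hg⟩
  let LC : Matrix J I (MvPolynomial σ K) := L.map C
  have hev : ∀ x, eval x (LC * M).det = (L * M.map (eval x)).det := fun x => by
    rw [RingHom.map_det, RingHom.mapMatrix_apply, Matrix.map_mul]
    congr 2
    ext i j
    simp [LC]
  refine ⟨(LC * M).det, by rw [hev, hL, det_one]; exact one_ne_zero, fun x hx w hw => ?_⟩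
  refine eq_zero_of_mulVec_eq_zero (hev x ▸ hx) ?_
  rw [← mulVec_mulVec, hw, mulVec_zero]

theorem Semistable.exists_eval_ne_zero {ω : ι → J → ℝ}
    {T : ι → Matrix J J (MvPolynomial σ K)} {x₀ : σ → K}
    (h : Semistable ω fun c => (T c).map (eval x₀)) :
    ∃ D : MvPolynomial σ K, eval x₀ D ≠ 0 ∧
      ∀ x, eval x D ≠ 0 → Semistable ω fun c => (T c).map (eval x) := by
  classical
  let M (t : ι → J) : Matrix {r : ι × J // ω r.1 r.2 < ω r.1 (t r.1)} J (MvPolynomial σ K) :=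
    of fun r => T r.1.1 r.1.2
  have hM : ∀ t x w, (M t).map (eval x) *ᵥ w = 0 ↔
      ∀ c i, ω c i < ω c (t c) → ((T c).map (eval x) *ᵥ w) i = 0 := fun t x w => by
    rw [funext_iff, Subtype.forall, Prod.forall]
    rfl
  have hD : ∀ t, ∃ D : MvPolynomial σ K, eval x₀ D ≠ 0 ∧ ∀ x, eval x D ≠ 0 →
      0 < ∑ c, ω c (t c) → ∀ w, (M t).map (eval x) *ᵥ w = 0 → w = 0 := fun t => by
    by_cases ht : 0 < ∑ c, ω c (t c)
    · obtain ⟨D, hD₀, hD⟩ := exists_eval_ne_zero_of_mulVec_injective (M t) x₀ fun w hw =>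
        h t ht w ((hM t x₀ w).mp hw)
      exact ⟨D, hD₀, fun x hx _ => hD x hx⟩
    · exact ⟨1, by simp, fun _ _ h => absurd h ht⟩
  choose D hD₀ hD using hD
  refine ⟨∏ t, D t, by simpa [Finset.prod_eq_zero_iff] using hD₀, fun x hx t ht w hw => ?_⟩
  rw [map_prod, Finset.prod_ne_zero_iff] at hx
  exact hD t x (hx t (Finset.mem_univ t)) ht w ((hM t x w).mpr hw)

lemma exists_eval_algebraMap_ne_zero {k : Type*} [Field k] [Infinite k] [Algebra k K]
    {D : MvPolynomial σ K} (hD : D ≠ 0) :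
    ∃ y : σ → k, eval (fun v => algebraMap k K (y v)) D ≠ 0 := by
  by_contra! hc
  refine hD (funext_set (fun _ => Set.range (algebraMap k K))
    (fun _ => Set.infinite_range_of_injective (algebraMap k K).injective) fun x hx => ?_)
  choose y hy using fun v => hx v (Set.mem_univ v)
  obtain rfl : (fun v => algebraMap k K (y v)) = x := funext hy
  rw [hc, map_zero]

end Zariski

lemma semistable_piKronecker_of_sum_eq_zero {ι m κ 𝕜 : Type*} [Fintype ι] [Fintype m]
    [DecidableEq m] [Fintype κ] [DecidableEq κ] [RCLike 𝕜]
    (α : ι → m → ℝ) (X : ι → Matrix m m 𝕜) (hX : ∀ c, (X c)ᴴ * X c = 1)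
    (hsum : ∑ c, (X c)ᴴ * diagonal (fun i => (α c i : 𝕜)) * X c = 0) :
    Semistable (fun c (i : κ → m) => ∑ a, α c (i a)) fun c => piKronecker fun _ => X c := by
  refine semistable_of_sum_eq_zero _ _ (fun c => ?_) ?_
  · rw [piKronecker_conjTranspose, ← piKronecker_mul]
    simp only [hX, piKronecker_one]
  · simpa only [RCLike.ofReal_sum] using sum_conjTranspose_piKronecker_eq_zero _ X hX hsum

open MvPolynomial in
theorem exists_semistable_piKronecker_of_algebra {ι m P k K : Type*} {κ : P → Type*}
    [Fintype ι] [Fintype m] [DecidableEq m] [Finite P] [∀ p, Fintype (κ p)]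
    [∀ p, DecidableEq (κ p)] [Field k] [Infinite k] [Field K] [Algebra k K]
    (ω : ∀ p, ι → (κ p → m) → ℝ) (X : ι → Matrix m m K) (hX : ∀ c, (X c).det ≠ 0)
    (hss : ∀ p, Semistable (ω p) fun c => piKronecker fun _ : κ p => X c) :
    ∃ Y : ι → Matrix m m k, (∀ c, (Y c).det ≠ 0) ∧
      ∀ p, Semistable (ω p) fun c => piKronecker fun _ : κ p => Y c := by
  have := Fintype.ofFinite P
  let V (c : ι) : Matrix m m (MvPolynomial (ι × m × m) K) := of fun i j => MvPolynomial.X (c, i, j)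
  let pt (Z : ι → Matrix m m K) : ι × m × m → K := fun v => Z v.1 v.2.1 v.2.2
  have hV : ∀ Z c, (V c).map (eval (pt Z)) = Z c := fun Z c => by
    ext i j
    simp [V, pt]
  have hdet : ∀ Z c, eval (pt Z) (V c).det = (Z c).det := fun Z c => by
    rw [RingHom.map_det, RingHom.mapMatrix_apply, hV]
  have hpow : ∀ Z p, (fun c => (piKronecker fun _ : κ p => V c).map (eval (pt Z))) =
      fun c => piKronecker fun _ : κ p => Z c := fun Z p => by
    simp only [piKronecker_map, hV]
  choose D hD₀ hD using fun p => Semistable.exists_eval_ne_zero (x₀ := pt X) (by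
    rw [hpow]
    exact hss p)
  have hne : (∏ p, D p) * ∏ c, (V c).det ≠ 0 := fun h => by
    have h := congrArg (eval (pt X)) h
    rw [map_mul, map_prod, map_prod, map_zero] at h
    simp only [hdet, mul_eq_zero, Finset.prod_eq_zero_iff] at h
    obtain ⟨p, -, hp⟩ | ⟨c, -, hc⟩ := h
    exacts [hD₀ p hp, hX c hc]
  obtain ⟨y, hy⟩ := exists_eval_algebraMap_ne_zero (k := k) hne
  let Y (c : ι) : Matrix m m k := of fun i j => y (c, i, j)
  let Z (c : ι) : Matrix m m K := (Y c).map (algebraMap k K)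
  have hZ : eval (pt Z) ((∏ p, D p) * ∏ c, (V c).det) ≠ 0 := hy
  rw [map_mul, map_prod, map_prod, mul_ne_zero_iff, Finset.prod_ne_zero_iff,
    Finset.prod_ne_zero_iff] at hZ
  refine ⟨Y, fun c h => hZ.2 c (Finset.mem_univ c) ?_, fun p => ?_⟩
  · exact (hdet Z c).trans ((RingHom.map_det _ _).symm.trans (by rw [h, map_zero]))
  · refine Semistable.of_map (algebraMap k K).injective ?_
    simpa only [piKronecker_map, hV] using hD p _ (hZ.1 p (Finset.mem_univ p))

/-! ### Bruhat decomposition -/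

section Bruhat

variable {K : Type*} [Field K]

lemma exists_leading_coeff_factor {n : ℕ} (v : Fin (n + 1) → K) :
    ∃ (j : Fin (n + 1)) (r : Fin (n + 1) → K),
      r j = 1 ∧ (∀ k < j, r k = 0) ∧ ∀ k, v k = v j * r k := by
  by_cases hv : v = 0
  · exact ⟨0, Pi.single 0 1, by simp, fun k hk => absurd hk (Fin.not_lt_zero k), by simp [hv]⟩
  · obtain ⟨j, hj, hmin⟩ := WellFounded.has_min (wellFounded_lt (α := Fin (n + 1)))
      {k | v k ≠ 0} (Function.ne_iff.mp hv)
    exact ⟨j, fun k => (v j)⁻¹ * v k, inv_mul_cancel₀ hj,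
      fun k hk => mul_eq_zero_of_right _ (not_not.mp fun hk₀ => hmin k hk₀ hk),
      fun k => (mul_inv_cancel_left₀ hj _).symm⟩

theorem exists_eq_lower_mul_upper_submatrix :
    ∀ {n : ℕ} (N : Matrix (Fin n) (Fin n) K), ∃ (τ : Equiv.Perm (Fin n))
      (L R : Matrix (Fin n) (Fin n) K), L.IsLowerTriangular ∧ R.IsUpperTriangular ∧
        N = L * R.submatrix τ id
  | 0, N => ⟨1, N, 1, fun i => i.elim0, fun i => i.elim0, Subsingleton.elim _ _⟩
  | n + 1, N => by
    -- Clear the first row by column operations to the right of its pivot column `j`.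
    obtain ⟨j, r, hj, hr, hN⟩ := exists_leading_coeff_factor (N 0)
    obtain ⟨τ, L, R, hL, hR, hLR⟩ := exists_eq_lower_mul_upper_submatrix
      (of fun i k => N i.succ (j.succAbove k) - N i.succ j * r (j.succAbove k))
    let τ' : Equiv.Perm (Fin (n + 1)) :=
      (finSuccEquiv' 0).trans (τ.optionCongr.trans (finSuccEquiv' j).symm)
    have hτ₀ : τ' 0 = j := by simp [τ']
    have hτ_succ : ∀ i : Fin n, τ' i.succ = j.succAbove (τ i) := fun i => by
      simp [τ', finSuccEquiv'_zero]
    refine ⟨τ', of fun i => Fin.cases (N i j) fun l => Fin.cases 0 (fun i => L i l) i,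
      of (j.insertNth r fun a => j.insertNth 0 (R a)), fun i l hil => ?_, fun l k hkl => ?_, ?_⟩
    · replace hil : i < l := hil
      obtain ⟨l, rfl⟩ := Fin.exists_succ_eq.mpr (Fin.ne_zero_of_lt hil)
      cases i using Fin.cases with
      | zero => simp
      | succ i => simpa using hL (Fin.succ_lt_succ_iff.mp hil)
    · replace hkl : k < l := hkl
      cases l using j.succAboveCases with
      | x => simpa using hr k hkl
      | p l =>
        cases k using j.succAboveCases with
        | x => simp
        | p k => simpa using hR (Fin.succAbove_lt_succAbove_iff.mp hkl)
    · ext i k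
      simp only [mul_apply, Fin.sum_univ_succ, submatrix_apply, hτ₀, hτ_succ, id, of_apply,
        Fin.cases_zero, Fin.cases_succ, Fin.insertNth_apply_same, Fin.insertNth_apply_succAbove]
      cases i using Fin.cases with
      | zero => simp [hN k]
      | succ i =>
        cases k using j.succAboveCases with
        | x => simp [hj]
        | p k =>
          have h := congrFun (congrFun hLR i) k
          simp only [of_apply, mul_apply, submatrix_apply, id] at h
          simp only [Fin.cases_succ, Fin.insertNth_apply_succAbove, ← h]
          ring

end Bruhat

/-! ### Minors -/

section Minors

variable {κ m R : Type*} [CommRing R] [Fintype κ] [DecidableEq κ]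

lemma det_mul_eq_sum_prod_mul_det [Fintype m] (A : Matrix κ m R) (B : Matrix m κ R) :
    (A * B).det = ∑ j : κ → m, (∏ a, A a (j a)) * (B.submatrix j id).det := by
  have hAB : A * B = fun a => ∑ j, A a j • B j := by
    ext a b
    simp [mul_apply]
  rw [hAB]
  refine (detRowAlternating.toMultilinearMap.map_sum fun a j => A a j • B j).trans ?_
  exact Finset.sum_congr rfl fun j _ => detRowAlternating.toMultilinearMap.map_smul_univ _ _

lemma exists_det_submatrix_ne_zero [Fintype m] [Nontrivial R] (V : Matrix κ m R) (W : Matrix m κ R)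
    (hVW : V * W = 1) : ∃ j : κ → m, (W.submatrix j id).det ≠ 0 := by
  by_contra! hW
  have h := det_mul_eq_sum_prod_mul_det V W
  simp [hVW, hW] at h

/-- The maximal minors of `W` form the antisymmetric tensor of its columns, on which the tensor
power of `Y` acts by replacing `W` with `Y * W`. -/
lemma piKronecker_mulVec_minors [Fintype m] (Y : Matrix m m R) (W : Matrix m κ R) :
    ((piKronecker fun _ : κ => Y) *ᵥ fun j => (W.submatrix j id).det) =
      fun i => ((Y * W).submatrix i id).det :=
  funext fun i => (det_mul_eq_sum_prod_mul_det (Y.submatrix i id) W).symm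

lemma exists_perm_le_of_det_submatrix_ne_zero [LinearOrder m] {L : Matrix m m R}
    (hL : L.IsLowerTriangular) {i s : κ → m} (h : (L.submatrix i s).det ≠ 0) :
    ∃ π : Equiv.Perm κ, ∀ a, s a ≤ i (π a) := by
  by_contra! hs
  refine h ((det_apply _).trans (Finset.sum_eq_zero fun π _ => ?_))
  obtain ⟨a, ha⟩ := hs π
  rw [Finset.prod_eq_zero (Finset.mem_univ a) (hL ha), smul_zero]

end Minors

/-! ### Leading blocks -/

/-- The first `k` indices of a matrix of size `n`. -/
abbrev Leading (n k : ℕ) : Type := {i : Fin n // (i : ℕ) < k}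

/-- The inclusion of the first `k` indices; `Z.submatrix (Leading.incl n k) (Leading.incl n k)` is
the `k`-th leading block of `Z`. -/
abbrev Leading.incl (n k : ℕ) : Leading n k → Fin n := Subtype.val

instance Leading.isEmpty_zero (n : ℕ) : IsEmpty (Leading n 0) := ⟨fun i => Nat.not_lt_zero _ i.2⟩

section Leading

variable {n : ℕ}

lemma sum_leading_succ {M : Type*} [AddCommMonoid M] (f : Fin n → M) (i : Fin n) :
    ∑ j : Leading n (i + 1), f j = ∑ j : Leading n i, f j + f i := by
  have hfilter : ∀ k : ℕ, ∑ j : Leading n k, f j =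
      ∑ j ∈ Finset.univ.filter (fun j : Fin n => (j : ℕ) < k), f j := fun k =>
    (Finset.sum_subtype _ (by simp) f).symm
  have hinsert : Finset.univ.filter (fun j : Fin n => (j : ℕ) < i + 1) =
      insert i (Finset.univ.filter fun j : Fin n => (j : ℕ) < i) := by
    ext j
    simp only [Finset.mem_filter_univ, Finset.mem_insert, Fin.ext_iff]
    omega
  rw [hfilter, hfilter, hinsert, Finset.sum_insert (by simp), add_comm]

variable {R : Type*} [CommRing R]

lemma submatrix_mul_of_isUpperTriangular {m o : Type*} (A : Matrix m (Fin n) R)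
    {B : Matrix (Fin n) (Fin n) R} (hB : B.IsUpperTriangular) (i : o → m) (k : ℕ) :
    (A * B).submatrix i (Leading.incl n k) =
      A.submatrix i (Leading.incl n k) * B.submatrix (Leading.incl n k) (Leading.incl n k) := by
  ext a b
  refine (Fintype.sum_subtype_add_sum_subtype (fun j : Fin n => (j : ℕ) < k) _).symm.trans
    (add_eq_left.mpr (Finset.sum_eq_zero fun j _ => ?_))
  exact mul_eq_zero_of_right _ (hB (b.2.trans_le (not_lt.mp j.2)))

lemma submatrix_mul_of_isLowerTriangular {m o : Type*} {A : Matrix (Fin n) (Fin n) R}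
    (hA : A.IsLowerTriangular) (B : Matrix (Fin n) m R) (j : o → m) (k : ℕ) :
    (A * B).submatrix (Leading.incl n k) j =
      A.submatrix (Leading.incl n k) (Leading.incl n k) *
        B.submatrix (Leading.incl n k) j := by
  simpa using congrArg transpose (submatrix_mul_of_isUpperTriangular Bᵀ hA.transpose j k)

end Leading

/-! ### The numerical criterion -/

theorem Semistable.sum_leading_nonpos {n p : ℕ} {ι K : Type*} [Fintype ι] [Field K]
    {α : ι → Fin n → ℝ} (hα : ∀ c, Monotone (α c)) {Y : ι → Matrix (Fin n) (Fin n) K}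
    (hss : Semistable (fun c (i : Leading n p → Fin n) => ∑ a, α c (i a))
      fun c => piKronecker fun _ => Y c)
    {U : Matrix (Fin n) (Fin n) K} (hU : IsUnit U) {τ : ι → Equiv.Perm (Fin n)}
    {L R : ι → Matrix (Fin n) (Fin n) K} (hL : ∀ c, (L c).IsLowerTriangular)
    (hR : ∀ c, (R c).IsUpperTriangular) (hYU : ∀ c, Y c * U = L c * (R c).submatrix (τ c) id) :
    ∑ c, ∑ a : Leading n p, α c ((τ c).symm a) ≤ 0 := by
  by_contra! hpos
  -- The test vector is the antisymmetric tensor of the first `p` columns of `U`.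
  have hw := hss (fun c a => (τ c).symm a) hpos
    (fun j => (U.submatrix j (Leading.incl n p)).det) fun c i hi => ?_
  · obtain ⟨V, hV⟩ := hU.exists_left_inv
    obtain ⟨j, hj⟩ := exists_det_submatrix_ne_zero (V.submatrix (Leading.incl n p) id)
      (U.submatrix id (Leading.incl n p)) (by
        rw [← submatrix_mul _ _ _ _ _ Function.bijective_id, hV,
          submatrix_one _ Subtype.val_injective])
    exact hj (congrFun hw j)
  · by_contra hne
    have hminor : ((Y c * U).submatrix i (Leading.incl n p)).det ≠ 0 := fun h =>
      hne <| (congrFun (piKronecker_mulVec_minors (Y c)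
        (U.submatrix id (Leading.incl n p))) i).trans h
    have hfactor : Y c * U = (L c).submatrix id (τ c).symm * R c := by
      have h := submatrix_mul_equiv (L c) ((R c).submatrix (τ c) id) id (τ c).symm id
      rw [submatrix_submatrix, (τ c).self_comp_symm] at h
      exact (hYU c).trans h.symm
    rw [hfactor, submatrix_mul_of_isUpperTriangular _ (hR c), det_mul] at hminor
    obtain ⟨π, hπ⟩ := exists_perm_le_of_det_submatrix_ne_zero (hL c)
      (left_ne_zero_of_mul hminor)
    refine hi.not_ge ?_
    calc ∑ a : Leading n p, α c ((τ c).symm a) ≤ ∑ a, α c (i (π a)) :=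
          Finset.sum_le_sum fun a _ => hα c (hπ a)
      _ = ∑ a, α c (i a) := Equiv.sum_comp π fun a => α c (i a)

/-! ### Summation by parts -/

lemma sum_mul_sub_le_mul {n : ℕ} {α : Fin n → ℝ} (hα : Monotone α) {b : ℝ} (hb : ∀ i, α i ≤ b)
    {S : ℕ → ℝ} (h₀ : S 0 = 0) (hS : ∀ k ≤ n, 0 ≤ S k) :
    ∑ i : Fin n, α i * (S (i + 1) - S i) ≤ b * S n := by
  induction n generalizing b with
  | zero => simp [h₀]
  | succ n ih =>
    rw [Fin.sum_univ_castSucc]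
    calc _ ≤ α (Fin.last n) * S n + α (Fin.last n) * (S (n + 1) - S n) := by
          exact add_le_add_left (ih (hα.comp Fin.strictMono_castSucc.monotone)
            (fun i => hα (Fin.le_last _)) fun k hk => hS k (hk.trans n.le_succ)) _
      _ = α (Fin.last n) * S (n + 1) := by ring
      _ ≤ b * S (n + 1) := mul_le_mul_of_nonneg_right (hb _) (hS _ le_rfl)

lemma sum_mul_sub_nonpos {n : ℕ} {α : Fin n → ℝ} (hα : Monotone α) {S : ℕ → ℝ} (h₀ : S 0 = 0)
    (hn : S n = 0) (hS : ∀ k ≤ n, 0 ≤ S k) : ∑ i : Fin n, α i * (S (i + 1) - S i) ≤ 0 := by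
  obtain ⟨b, hb⟩ := (Set.finite_range α).bddAbove
  simpa [hn] using sum_mul_sub_le_mul hα (fun i => hb (Set.mem_range_self i)) h₀ hS

/-! ### Determinant inequalities -/

lemma one_le_det_one_add {κ : Type*} [Fintype κ] [DecidableEq κ] {S : Matrix κ κ ℝ}
    (hS : S.PosSemidef) : 1 ≤ (1 + S).det := by
  have hH : (1 + S).IsHermitian := isHermitian_one.add hS.isHermitian
  rw [hH.det_eq_prod_eigenvalues]
  refine Finset.one_le_prod fun i => ?_
  have hv : star ⇑(hH.eigenvectorBasis i) ⬝ᵥ ⇑(hH.eigenvectorBasis i) = 1 := by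
    rw [dotProduct_comm, ← EuclideanSpace.inner_eq_star_dotProduct (𝕜 := ℝ)]
    simp
  have hpos := hS.dotProduct_mulVec_nonneg ⇑(hH.eigenvectorBasis i)
  rw [hH.eigenvalues_eq, add_mulVec, one_mulVec, dotProduct_add, hv]
  simpa using hpos

lemma sq_det_le_det_mul_transpose_add {κ : Type*} [Fintype κ] [DecidableEq κ] (B : Matrix κ κ ℝ)
    {S : Matrix κ κ ℝ} (hS : S.PosSemidef) : B.det ^ 2 ≤ (B * Bᵀ + S).det := by
  by_cases hB : B.det = 0
  · rw [hB, zero_pow two_ne_zero]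
    exact ((posSemidef_self_mul_conjTranspose B).add hS).det_nonneg
  · have hB' : IsUnit B.det := isUnit_iff_ne_zero.mpr hB
    have hfactor : B * Bᵀ + S = B * (1 + B⁻¹ * S * B⁻¹ᵀ) * Bᵀ := by
      rw [Matrix.mul_add, Matrix.add_mul, Matrix.mul_one, transpose_nonsing_inv]
      simp only [← Matrix.mul_assoc, mul_nonsing_inv _ hB', Matrix.one_mul]
      rw [Matrix.mul_assoc, nonsing_inv_mul _ (by rwa [det_transpose]), Matrix.mul_one]
    have h1 := one_le_det_one_add (hS.mul_mul_conjTranspose_same B⁻¹)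
    rw [conjTranspose_eq_transpose_of_trivial] at h1
    rw [hfactor, det_mul, det_mul, det_transpose]
    nlinarith [sq_nonneg B.det]

lemma mul_diagonal_mul_transpose_eq {l m : Type*} [Fintype m] [DecidableEq m] (A : Matrix l m ℝ)
    {d : m → ℝ} (hd : 0 ≤ d) : A * diagonal d * Aᵀ =
      (A * diagonal fun i => √(d i)) * (A * diagonal fun i => √(d i))ᵀ := by
  have hdiag : diagonal d = (diagonal fun i => √(d i)) * diagonal fun i => √(d i) := by
    simp only [diagonal_mul_diagonal, Real.mul_self_sqrt (hd _)]
  rw [hdiag, transpose_mul, diagonal_transpose]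
  simp only [Matrix.mul_assoc]

/-! ### Leading minors -/

/-- The `k`-th leading principal minor. -/
def leadingMinor {n : ℕ} {R : Type*} [CommRing R] (Z : Matrix (Fin n) (Fin n) R) (k : ℕ) : R :=
  (Z.submatrix (Leading.incl n k) (Leading.incl n k)).det

section LeadingMinor

variable {n : ℕ}

section CommRing

variable {R : Type*} [CommRing R] (Z : Matrix (Fin n) (Fin n) R) (k : ℕ)

lemma leadingMinor_zero : leadingMinor Z 0 = 1 := det_isEmpty

lemma leadingMinor_self : leadingMinor Z n = Z.det :=
  det_submatrix_equiv_self (Equiv.subtypeUnivEquiv Fin.is_lt) Z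

lemma leadingMinor_transpose : leadingMinor Zᵀ k = leadingMinor Z k := det_transpose _

variable {Z}

lemma leadingMinor_lower_mul {L : Matrix (Fin n) (Fin n) R} (hL : L.IsLowerTriangular) :
    leadingMinor (L * Z) k = leadingMinor L k * leadingMinor Z k := by
  rw [leadingMinor, submatrix_mul_of_isLowerTriangular hL, det_mul]
  rfl

lemma leadingMinor_mul_upper {U : Matrix (Fin n) (Fin n) R} (hU : U.IsUpperTriangular) :
    leadingMinor (Z * U) k = leadingMinor Z k * leadingMinor U k := by
  rw [leadingMinor, submatrix_mul_of_isUpperTriangular _ hU, det_mul]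
  rfl

lemma leadingMinor_mul_diagonal (d : Fin n → R) :
    leadingMinor (Z * diagonal d) k = leadingMinor Z k * ∏ a : Leading n k, d a := by
  rw [leadingMinor_mul_upper k (blockTriangular_diagonal d), leadingMinor, leadingMinor,
    submatrix_diagonal _ _ Subtype.val_injective, det_diagonal]
  rfl

end CommRing

lemma det_submatrix_ne_zero_of_isUpperTriangular {m κ K : Type*} [LinearOrder m] [Fintype m]
    [Fintype κ] [DecidableEq κ] [Field K] {M : Matrix m m K} (hM : M.IsUpperTriangular)
    (hdet : M.det ≠ 0) {f : κ → m} (hf : Function.Injective f) : (M.submatrix f f).det ≠ 0 := by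
  let _ := LinearOrder.lift' f hf
  have hMf : (M.submatrix f f).IsUpperTriangular := fun i j hij => hM hij
  rw [det_of_isUpperTriangular hM, Finset.prod_ne_zero_iff] at hdet
  convert (det_of_isUpperTriangular hMf).trans_ne
    (Finset.prod_ne_zero_iff.mpr fun a _ => hdet (f a) (Finset.mem_univ _))

lemma leadingMinor_ne_zero_of_isLowerTriangular {K : Type*} [Field K] {L : Matrix (Fin n) (Fin n) K}
    (hL : L.IsLowerTriangular) (hdet : L.det ≠ 0) (k : ℕ) : leadingMinor L k ≠ 0 := by
  have hU : Lᵀ.IsUpperTriangular := hL.transpose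
  rw [← leadingMinor_transpose]
  exact det_submatrix_ne_zero_of_isUpperTriangular hU (by rwa [det_transpose])
    Subtype.val_injective

lemma leadingMinor_pos {Z : Matrix (Fin n) (Fin n) ℝ} (hZ : Z.PosDef) (k : ℕ) :
    0 < leadingMinor Z k := (hZ.submatrix Subtype.val_injective).det_pos

lemma sq_leadingMinor_le (A : Matrix (Fin n) (Fin n) ℝ) (k : ℕ) :
    leadingMinor A k ^ 2 ≤ leadingMinor (A * Aᵀ) k := by
  let C := A.submatrix (Leading.incl n k) (Subtype.val : {j : Fin n // ¬(j : ℕ) < k} → Fin n)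
  have hsplit : (A * Aᵀ).submatrix (Leading.incl n k) (Leading.incl n k) =
      A.submatrix (Leading.incl n k) (Leading.incl n k) *
        (A.submatrix (Leading.incl n k) (Leading.incl n k))ᵀ + C * Cᵀ := by
    ext a b
    exact (Fintype.sum_subtype_add_sum_subtype (fun j : Fin n => (j : ℕ) < k) _).symm
  rw [leadingMinor, leadingMinor, hsplit]
  exact sq_det_le_det_mul_transpose_add _ (posSemidef_self_mul_conjTranspose C)

lemma sq_leadingMinor_mul_prod_le (A : Matrix (Fin n) (Fin n) ℝ) {d : Fin n → ℝ} (hd : 0 ≤ d)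
    (k : ℕ) : leadingMinor A k ^ 2 * ∏ a : Leading n k, d a ≤
      leadingMinor (A * diagonal d * Aᵀ) k := by
  have h := sq_leadingMinor_le (A * diagonal fun i => √(d i)) k
  rw [leadingMinor_mul_diagonal, mul_pow, ← Finset.prod_pow,
    ← mul_diagonal_mul_transpose_eq A hd] at h
  simpa only [Real.sq_sqrt (hd _)] using h

end LeadingMinor

/-! ### Weighted logarithmic volume -/

/-- The weighted logarithmic volume: `∑ i, α i * log ρ i`, where `ρ i` is the ratio of consecutive
leading minors of `Z`. It is meant for matrices whose leading minors do not vanish; the sign of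
the minors is irrelevant, since `Real.log x = Real.log |x|`. -/
noncomputable def logVol {n : ℕ} (α : Fin n → ℝ) (Z : Matrix (Fin n) (Fin n) ℝ) : ℝ :=
  ∑ i : Fin n, α i * (Real.log (leadingMinor Z (i + 1)) - Real.log (leadingMinor Z i))

section LogVol

variable {n : ℕ} (α : Fin n → ℝ)

lemma leadingMinor_one {R : Type*} [CommRing R] (k : ℕ) :
    leadingMinor (1 : Matrix (Fin n) (Fin n) R) k = 1 := by
  rw [leadingMinor, submatrix_one _ Subtype.val_injective, det_one]

lemma logVol_one : logVol α 1 = 0 := by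
  simp [logVol, leadingMinor_one]

lemma logVol_lower_mul_mul_transpose {L Z : Matrix (Fin n) (Fin n) ℝ} (hL : L.IsLowerTriangular)
    (hdet : L.det ≠ 0) (hZ : ∀ k, leadingMinor Z k ≠ 0) :
    logVol α (L * Z * Lᵀ) = 2 * logVol α L + logVol α Z := by
  have hU : Lᵀ.IsUpperTriangular := hL.transpose
  have hlog : ∀ k, Real.log (leadingMinor (L * Z * Lᵀ) k) =
      2 * Real.log (leadingMinor L k) + Real.log (leadingMinor Z k) := fun k => by
    have hLk := leadingMinor_ne_zero_of_isLowerTriangular hL hdet k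
    rw [leadingMinor_mul_upper _ hU, leadingMinor_lower_mul _ hL, leadingMinor_transpose,
      Real.log_mul (mul_ne_zero hLk (hZ k)) hLk, Real.log_mul hLk (hZ k)]
    ring
  simp only [logVol, hlog, Finset.mul_sum, ← Finset.sum_add_distrib]
  exact Finset.sum_congr rfl fun i _ => by ring

lemma continuousAt_logVol {Z : Matrix (Fin n) (Fin n) ℝ} (hZ : ∀ k, leadingMinor Z k ≠ 0) :
    ContinuousAt (logVol α) Z := by
  have hlog : ∀ k, ContinuousAt (fun Z : Matrix (Fin n) (Fin n) ℝ =>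
      Real.log (leadingMinor Z k)) Z := fun k =>
    ((continuous_id.matrix_submatrix _ _).matrix_det).continuousAt.log (hZ k)
  exact tendsto_finsetSum _ fun i _ =>
    continuousAt_const.mul ((hlog (i + 1)).sub (hlog i))

lemma hasDerivAt_log_det_one_add_smul {κ : Type*} [Fintype κ] [DecidableEq κ]
    (M : Matrix κ κ ℝ) : HasDerivAt (fun t : ℝ => Real.log (1 + t • M).det) M.trace 0 := by
  have hdet : HasDerivAt (fun t : ℝ => (1 + t • M).det) M.trace 0 := by
    rw [funext fun t : ℝ => det_one_add_smul t M]
    generalize (1 + (Polynomial.X : Polynomial ℝ) • M.map Polynomial.C).det.divX.divX = p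
    have hsum := (((hasDerivAt_id (0 : ℝ)).const_mul M.trace).const_add 1).add
      ((p.hasDerivAt 0).mul ((hasDerivAt_id (0 : ℝ)).pow 2))
    convert! hsum using 1
    simp
  simpa using hdet.log (by simp)

lemma hasDerivAt_logVol_one_add_smul (M : Matrix (Fin n) (Fin n) ℝ) :
    HasDerivAt (fun t : ℝ => logVol α (1 + t • M)) (∑ i, α i * M i i) 0 := by
  have hminor : ∀ k : ℕ, HasDerivAt (fun t : ℝ => Real.log (leadingMinor (1 + t • M) k))
      (∑ a : Leading n k, M a a) 0 := fun k => by
    have h := hasDerivAt_log_det_one_add_smul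
      (M.submatrix (Leading.incl n k) (Leading.incl n k))
    rw [← submatrix_one (Leading.incl n k) Subtype.val_injective] at h
    exact h
  refine HasDerivAt.fun_sum fun i _ => ?_
  have hdiff := ((hminor (i + 1)).sub (hminor i)).const_mul (α i)
  rwa [sum_leading_succ (fun a => M a a), add_sub_cancel_left] at hdiff

variable {α}

lemma logVol_mul_diagonal_mul_transpose_le (hα : Monotone α) {A : Matrix (Fin n) (Fin n) ℝ}
    (hA : ∀ k ≤ n, leadingMinor A k ≠ 0) {d : Fin n → ℝ} (hd : ∀ i, 0 < d i) :
    logVol α (A * diagonal d * Aᵀ) ≤ 2 * logVol α A + ∑ i, α i * Real.log (d i) := by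
  let S : ℕ → ℝ := fun k => Real.log (leadingMinor (A * diagonal d * Aᵀ) k) -
    (2 * Real.log (leadingMinor A k) + ∑ a : Leading n k, Real.log (d a))
  have hlog : ∀ k ≤ n, Real.log (leadingMinor A k ^ 2 * ∏ a : Leading n k, d a) =
      2 * Real.log (leadingMinor A k) + ∑ a : Leading n k, Real.log (d a) := fun k hk => by
    have hprod : ∏ a : Leading n k, d a ≠ 0 := Finset.prod_ne_zero_iff.mpr fun a _ => (hd a).ne'
    rw [Real.log_mul (pow_ne_zero 2 (hA k hk)) hprod, Real.log_pow,
      Real.log_prod (f := fun a : Leading n k => d a) fun a _ => (hd a).ne', Nat.cast_ofNat]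
  have hS : ∀ k ≤ n, 0 ≤ S k := fun k hk => by
    rw [sub_nonneg, ← hlog k hk]
    exact Real.log_le_log
      (mul_pos (sq_pos_of_ne_zero (hA k hk)) (Finset.prod_pos fun a _ => hd a))
      (sq_leadingMinor_mul_prod_le A (fun i => (hd i).le) k)
  have h₀ : S 0 = 0 := by
    rw [sub_eq_zero, ← hlog 0 n.zero_le]
    simp [leadingMinor_zero]
  have hn : S n = 0 := by
    have hprod : ∏ a : Leading n n, d a = ∏ i, d i :=
      (Equiv.subtypeUnivEquiv Fin.is_lt).prod_comp d
    rw [sub_eq_zero, ← hlog n le_rfl, leadingMinor_self, leadingMinor_self, det_mul, det_mul,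
      det_diagonal, det_transpose, hprod]
    ring_nf
  have habel := sum_mul_sub_nonpos hα h₀ hn hS
  have hsplit : ∑ i : Fin n, α i * (S (i + 1) - S i) = logVol α (A * diagonal d * Aᵀ) -
      (2 * logVol α A + ∑ i, α i * Real.log (d i)) := by
    simp only [S, logVol, sum_leading_succ fun a => Real.log (d a), Finset.mul_sum,
      ← Finset.sum_add_distrib, ← Finset.sum_sub_distrib]
    exact Finset.sum_congr rfl fun i _ => by ring
  linarith

end LogVol

/-! ### Matrix decompositions -/

lemma exists_conjTranspose_mul_diagonal_mul {m 𝕜 : Type*} [Fintype m] [DecidableEq m] [RCLike 𝕜]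
    {A : Matrix m m 𝕜} (hA : A.IsHermitian) {a : m → ℝ}
    (h : A.charpoly = ∏ i, (Polynomial.X - Polynomial.C (a i : 𝕜))) :
    ∃ V : Matrix m m 𝕜, Vᴴ * V = 1 ∧ A = Vᴴ * diagonal (fun i => (a i : 𝕜)) * V := by
  have hB : (diagonal fun i => (a i : 𝕜)).IsHermitian :=
    isHermitian_diagonal_iff.mpr fun i => RCLike.conj_ofReal (a i)
  have hev : hA.eigenvalues = hB.eigenvalues :=
    (hA.eigenvalues_eq_eigenvalues_iff hB).mpr (by rw [h, charpoly_diagonal])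
  let V := hB.eigenvectorUnitary * star hA.eigenvectorUnitary
  refine ⟨V, Unitary.coe_star_mul_self V, ?_⟩
  have hdiag := hA.spectral_theorem
  rw [hev, ← hB.conjStarAlgAut_star_eigenvectorUnitary, ← Unitary.conjStarAlgAut_mul_apply] at hdiag
  have hstar : hA.eigenvectorUnitary * star hB.eigenvectorUnitary = star V := by
    rw [star_mul, star_star]
  rw [hstar, Unitary.conjStarAlgAut_star_apply] at hdiag
  exact hdiag

lemma submatrix_mul_diagonal_mul_transpose {l m R : Type*} [Fintype m] [DecidableEq m] [CommRing R]
    (A : Matrix l m R) (d : m → R) (σ : Equiv.Perm m) :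
    A.submatrix id σ * diagonal (d ∘ σ) * (A.submatrix id σ)ᵀ = A * diagonal d * Aᵀ := by
  rw [← submatrix_diagonal_equiv, transpose_submatrix, submatrix_mul_equiv, submatrix_mul_equiv,
    submatrix_id_id]

lemma exists_orthogonal_antitone_diagonal {n : ℕ} {H : Matrix (Fin n) (Fin n) ℝ} (hH : H.PosDef) :
    ∃ (U : Matrix (Fin n) (Fin n) ℝ) (d : Fin n → ℝ), U * Uᵀ = 1 ∧ (∀ i, 0 < d i) ∧ Antitone d ∧
      H = U * diagonal d * Uᵀ := by
  let a := hH.isHermitian.eigenvalues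
  obtain ⟨V, hV, hdiag⟩ := exists_conjTranspose_mul_diagonal_mul hH.isHermitian (a := a)
    hH.isHermitian.charpoly_eq
  let σ := Tuple.sort (-a)
  refine ⟨Vᵀ.submatrix id σ, a ∘ σ, ?_, fun i => hH.eigenvalues_pos _,
    fun i j hij => neg_le_neg_iff.mp (Tuple.monotone_sort (-a) hij), ?_⟩
  · rw [transpose_submatrix, submatrix_mul_equiv, transpose_transpose, submatrix_id_id]
    exact hV
  · rw [submatrix_mul_diagonal_mul_transpose]
    exact hdiag

lemma exists_eq_mul_transpose_of_posDef {n : ℕ} {H : Matrix (Fin n) (Fin n) ℝ} (hH : H.PosDef) :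
    ∃ h : Matrix (Fin n) (Fin n) ℝ, h.det ≠ 0 ∧ H = h * hᵀ := by
  obtain ⟨U, d, -, hd, -, rfl⟩ := exists_orthogonal_antitone_diagonal hH
  have hsqrt := mul_diagonal_mul_transpose_eq U fun i => (hd i).le
  refine ⟨_, fun h => hH.det_pos.ne' ?_, hsqrt⟩
  rw [hsqrt, det_mul, h, zero_mul]

lemma isCompact_setOf_mul_transpose_eq_one {m : Type*} [Fintype m] [DecidableEq m] :
    IsCompact {U : Matrix m m ℝ | U * Uᵀ = 1} := by
  refine (isCompact_univ_pi fun _ : m => isCompact_univ_pi fun _ : m =>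
    isCompact_closedBall (0 : ℝ) 1).of_isClosed_subset ?_ fun U hU i _ j _ => ?_
  · exact isClosed_eq (continuous_id.matrix_mul continuous_id.matrix_transpose) continuous_const
  · exact mem_closedBall_zero_iff.mpr
      (entry_norm_bound_of_unitary (𝕜 := ℝ) (mem_unitaryGroup_iff.mpr hU) i j)

lemma exists_eq_lower_mul_orthogonal {n : ℕ} (Z : Matrix (Fin n) (Fin n) ℝ) :
    ∃ L Q : Matrix (Fin n) (Fin n) ℝ, L.IsLowerTriangular ∧ Q * Qᵀ = 1 ∧ Z = L * Q := by
  let f : Fin n → EuclideanSpace ℝ (Fin n) := fun i => WithLp.toLp 2 (Z i)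
  let b := InnerProductSpace.gramSchmidtOrthonormalBasis (𝕜 := ℝ) finrank_euclideanSpace f
  refine ⟨of fun i j => inner ℝ (b j) (f i), of fun i j => b i j, fun i j hij => ?_, ?_, ?_⟩
  · exact InnerProductSpace.gramSchmidtOrthonormalBasis_inv_triangular _ f hij
  · ext i j
    rw [one_apply, ← orthonormal_iff_ite.mp b.orthonormal i j]
    simp [mul_apply, PiLp.inner_apply, mul_comm]
  · ext i k
    have h := congrArg (fun v : EuclideanSpace ℝ (Fin n) => v k) (b.sum_repr' (f i))
    simpa [f, mul_apply] using h.symm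

/-! ### Boundedness of the weighted volume -/

section Bounded

variable {n : ℕ}

lemma sum_mul_log_nonpos {β d : Fin n → ℝ} (hβ : ∀ k ≤ n, ∑ a : Leading n k, β a ≤ 0)
    (htot : ∑ i, β i = 0) (hd : ∀ i, 0 < d i) (hanti : Antitone d) :
    ∑ i, β i * Real.log (d i) ≤ 0 := by
  have hmono : Monotone fun i => -Real.log (d i) := fun i j hij =>
    neg_le_neg (Real.log_le_log (hd j) (hanti hij))
  have hn : -∑ a : Leading n n, β a = 0 := by
    rw [neg_eq_zero, ← htot]
    exact (Equiv.subtypeUnivEquiv Fin.is_lt).sum_comp β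
  have habel := sum_mul_sub_nonpos hmono (S := fun k => -∑ a : Leading n k, β a) (by simp) hn
    fun k hk => neg_nonneg.mpr (hβ k hk)
  refine le_of_eq_of_le (Finset.sum_congr rfl fun i _ => ?_) habel
  rw [sum_leading_succ]
  ring

open Topology Filter in
lemma exists_eventually_logVol_le {α : Fin n → ℝ} (hα : Monotone α)
    {Y U₀ L R : Matrix (Fin n) (Fin n) ℝ} {τ : Equiv.Perm (Fin n)} (hdet : (Y * U₀).det ≠ 0)
    (hL : L.IsLowerTriangular) (hR : R.IsUpperTriangular) (hYU : Y * U₀ = L * R.submatrix τ id) :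
    ∃ C, ∀ᶠ U in 𝓝 U₀, ∀ d : Fin n → ℝ, (∀ i, 0 < d i) →
      logVol α (Y * (U * diagonal d * Uᵀ) * Yᵀ) ≤ C + ∑ i, α (τ.symm i) * Real.log (d i) := by
  let A : Matrix (Fin n) (Fin n) ℝ → Matrix (Fin n) (Fin n) ℝ := fun U => (Y * U).submatrix id τ
  have hA : Continuous A := (continuous_const.matrix_mul continuous_id).matrix_submatrix _ _
  have hA₀ : ∀ k, leadingMinor (A U₀) k ≠ 0 := fun k => by
    have hLR : L.det ≠ 0 ∧ R.det ≠ 0 := by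
      rw [hYU, det_mul, det_permute] at hdet
      exact ⟨left_ne_zero_of_mul hdet, right_ne_zero_of_mul (right_ne_zero_of_mul hdet)⟩
    have hfactor : A U₀ = L * R.submatrix τ τ := by
      simp only [A, hYU]
      rfl
    rw [hfactor, leadingMinor_lower_mul _ hL]
    exact mul_ne_zero (leadingMinor_ne_zero_of_isLowerTriangular hL hLR.1 k)
      (det_submatrix_ne_zero_of_isUpperTriangular hR hLR.2
        (τ.injective.comp Subtype.val_injective))
  have hnear : ∀ᶠ U in 𝓝 U₀, ∀ k ∈ Set.Iic n, leadingMinor (A U) k ≠ 0 :=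
    (eventually_all_finite (Set.finite_Iic n)).mpr fun k _ =>
      (hA.matrix_submatrix _ _).matrix_det.continuousAt.eventually_ne (hA₀ k)
  have hbound : ∀ᶠ U in 𝓝 U₀, logVol α (A U) < logVol α (A U₀) + 1 :=
    ((continuousAt_logVol α hA₀).comp hA.continuousAt).eventually_lt_const (lt_add_one _)
  refine ⟨2 * (logVol α (A U₀) + 1), ?_⟩
  filter_upwards [hnear, hbound] with U hU hlt d hd
  have hperm : Y * (U * diagonal d * Uᵀ) * Yᵀ = A U * diagonal (d ∘ τ) * (A U)ᵀ := by
    rw [submatrix_mul_diagonal_mul_transpose, transpose_mul]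
    simp only [Matrix.mul_assoc]
  have hsum : ∑ i, α (τ.symm i) * Real.log (d i) = ∑ i, α i * Real.log ((d ∘ τ) i) := by
    rw [← Equiv.sum_comp τ]
    simp only [Equiv.symm_apply_apply, Function.comp_apply]
  rw [hperm, hsum]
  linarith [logVol_mul_diagonal_mul_transpose_le hα hU (d := d ∘ τ) fun i => hd (τ i)]

variable {ι : Type*} [Fintype ι]

open Topology Filter in
lemma exists_eventually_sum_logVol_le {α : ι → Fin n → ℝ} (hα : ∀ c, Monotone (α c))
    (hsum : ∑ c, ∑ i, α c i = 0) {Y : ι → Matrix (Fin n) (Fin n) ℝ} (hY : ∀ c, (Y c).det ≠ 0)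
    (hss : ∀ p : Fin (n + 1), Semistable (fun c (i : Leading n p → Fin n) => ∑ a, α c (i a))
      fun c => piKronecker fun _ => Y c)
    {U₀ : Matrix (Fin n) (Fin n) ℝ} (hU₀ : U₀.det ≠ 0) :
    ∃ C, ∀ᶠ U in 𝓝 U₀, ∀ d : Fin n → ℝ, (∀ i, 0 < d i) → Antitone d →
      ∑ c, logVol (α c) (Y c * (U * diagonal d * Uᵀ) * (Y c)ᵀ) ≤ C := by
  choose τ L R hL hR hYU using fun c => exists_eq_lower_mul_upper_submatrix (Y c * U₀)
  choose C hC using fun c => exists_eventually_logVol_le (hα c)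
    (by rw [det_mul]; exact mul_ne_zero (hY c) hU₀) (hL c) (hR c) (hYU c)
  let β : Fin n → ℝ := fun j => ∑ c, α c ((τ c).symm j)
  have hβ : ∀ k ≤ n, ∑ a : Leading n k, β a ≤ 0 := fun k hk => by
    rw [Finset.sum_comm]
    exact Semistable.sum_leading_nonpos hα (hss ⟨k, Nat.lt_succ_of_le hk⟩)
      ((isUnit_iff_isUnit_det _).mpr hU₀.isUnit) hL hR hYU
  have htot : ∑ j, β j = 0 := by
    rw [Finset.sum_comm, ← hsum]
    exact Finset.sum_congr rfl fun c _ => Equiv.sum_comp _ (α c)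
  refine ⟨∑ c, C c, ?_⟩
  filter_upwards [eventually_all.mpr hC] with U hU d hd hanti
  calc ∑ c, logVol (α c) (Y c * (U * diagonal d * Uᵀ) * (Y c)ᵀ)
      ≤ ∑ c, (C c + ∑ j, α c ((τ c).symm j) * Real.log (d j)) :=
        Finset.sum_le_sum fun c _ => hU c d hd
    _ = ∑ c, C c + ∑ j, β j * Real.log (d j) := by
        rw [Finset.sum_add_distrib, Finset.sum_comm]
        simp only [β, Finset.sum_mul]
    _ ≤ ∑ c, C c := add_le_of_nonpos_right (sum_mul_log_nonpos hβ htot hd hanti)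

theorem exists_sum_logVol_le {α : ι → Fin n → ℝ} (hα : ∀ c, Monotone (α c))
    (hsum : ∑ c, ∑ i, α c i = 0) {Y : ι → Matrix (Fin n) (Fin n) ℝ} (hY : ∀ c, (Y c).det ≠ 0)
    (hss : ∀ p : Fin (n + 1), Semistable (fun c (i : Leading n p → Fin n) => ∑ a, α c (i a))
      fun c => piKronecker fun _ => Y c) :
    ∃ C, ∀ H : Matrix (Fin n) (Fin n) ℝ, H.PosDef →
      ∑ c, logVol (α c) (Y c * H * (Y c)ᵀ) ≤ C := by
  let P : Set (Matrix (Fin n) (Fin n) ℝ) → Prop := fun S =>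
    ∃ C, ∀ U ∈ S, ∀ d : Fin n → ℝ, (∀ i, 0 < d i) → Antitone d →
      ∑ c, logVol (α c) (Y c * (U * diagonal d * Uᵀ) * (Y c)ᵀ) ≤ C
  have hP : P {U | U * Uᵀ = 1} := by
    refine isCompact_setOf_mul_transpose_eq_one.induction_on (p := P) ?_ ?_ ?_ ?_
    · exact ⟨0, fun U hU => hU.elim⟩
    · exact fun S T hST ⟨C, hC⟩ => ⟨C, fun U hU => hC U (hST hU)⟩
    · rintro S T ⟨C, hC⟩ ⟨C', hC'⟩
      refine ⟨max C C', fun U hU d hd hanti => le_max_iff.mpr ?_⟩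
      exact hU.imp (fun h => hC U h d hd hanti) fun h => hC' U h d hd hanti
    · intro U₀ hU₀
      obtain ⟨C, hC⟩ := exists_eventually_sum_logVol_le hα hsum hY hss
        (det_ne_zero_of_right_inverse hU₀)
      exact ⟨_, mem_nhdsWithin_of_mem_nhds hC, C, fun U hU => hU⟩
  obtain ⟨C, hC⟩ := hP
  refine ⟨C, fun H hH => ?_⟩
  obtain ⟨U, d, hU, hd, hanti, rfl⟩ := exists_orthogonal_antitone_diagonal hH
  exact hC U hU d hd hanti

end Bounded

/-! ### Almost optimal and optimal frames -/

section Optimal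

variable {n : ℕ} {ι : Type*} [Fintype ι] (α : ι → Fin n → ℝ)

lemma posDef_mul_mul_transpose {m : Type*} [Fintype m] [DecidableEq m] {G : Matrix m m ℝ}
    (hG : G.PosDef) {h : Matrix m m ℝ} (hh : h.det ≠ 0) : (h * G * hᵀ).PosDef :=
  (IsUnit.posDef_star_right_conjugate_iff ((isUnit_iff_isUnit_det h).mpr hh.isUnit)).mpr hG

lemma exists_orthogonal_sum_logVol_le {Y : ι → Matrix (Fin n) (Fin n) ℝ}
    (hY : ∀ c, (Y c).det ≠ 0)
    (hbdd : ∃ C, ∀ H : Matrix (Fin n) (Fin n) ℝ, H.PosDef →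
      ∑ c, logVol (α c) (Y c * H * (Y c)ᵀ) ≤ C) {η : ℝ} (hη : 0 < η) :
    ∃ Q : ι → Matrix (Fin n) (Fin n) ℝ, (∀ c, Q c * (Q c)ᵀ = 1) ∧
      ∀ G : Matrix (Fin n) (Fin n) ℝ, G.PosDef → ∑ c, logVol (α c) (Q c * G * (Q c)ᵀ) ≤ η := by
  let S : Set ℝ := (fun H => ∑ c, logVol (α c) (Y c * H * (Y c)ᵀ)) ''
    {H : Matrix (Fin n) (Fin n) ℝ | H.PosDef}
  have hS : BddAbove S := hbdd.imp fun C hC => Set.forall_mem_image.mpr hC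
  obtain ⟨_, ⟨H, hH, rfl⟩, hlt⟩ := exists_lt_of_lt_csSup (s := S)
    (Set.Nonempty.image _ ⟨1, PosDef.one⟩) (sub_lt_self (sSup S) hη)
  obtain ⟨h, hh, rfl⟩ := exists_eq_mul_transpose_of_posDef hH
  choose L Q hL hQ hLQ using fun c => exists_eq_lower_mul_orthogonal (Y c * h)
  have hLdet : ∀ c, (L c).det ≠ 0 := fun c => by
    have hdet := mul_ne_zero (hY c) hh
    rw [← det_mul, hLQ, det_mul] at hdet
    exact left_ne_zero_of_mul hdet
  have hQdet : ∀ c, (Q c).det ≠ 0 := fun c => det_ne_zero_of_right_inverse (hQ c)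
  have hpull : ∀ G : Matrix (Fin n) (Fin n) ℝ, G.PosDef → ∀ c,
      logVol (α c) (Y c * (h * G * hᵀ) * (Y c)ᵀ) =
        2 * logVol (α c) (L c) + logVol (α c) (Q c * G * (Q c)ᵀ) := fun G hG c => by
    have hfactor : Y c * (h * G * hᵀ) * (Y c)ᵀ = L c * (Q c * G * (Q c)ᵀ) * (L c)ᵀ := by
      have : Y c * (h * G * hᵀ) * (Y c)ᵀ = (Y c * h) * G * (Y c * h)ᵀ := by
        simp only [transpose_mul, Matrix.mul_assoc]
      rw [this, hLQ]
      simp only [transpose_mul, Matrix.mul_assoc]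
    rw [hfactor, logVol_lower_mul_mul_transpose _ (hL c) (hLdet c) fun k =>
      (leadingMinor_pos (posDef_mul_mul_transpose hG (hQdet c)) k).ne']
  refine ⟨Q, hQ, fun G hG => ?_⟩
  have hle := le_csSup hS (Set.mem_image_of_mem _ (posDef_mul_mul_transpose hG hh))
  have hone := hpull 1 PosDef.one
  simp only [Matrix.mul_one, hQ, logVol_one, add_zero] at hone
  simp only [hpull G hG, hone, Finset.sum_add_distrib] at hle hlt
  linarith

open Topology Filter in
lemma exists_orthogonal_sum_logVol_nonpos
    (happrox : ∀ η > 0, ∃ Q : ι → Matrix (Fin n) (Fin n) ℝ, (∀ c, Q c * (Q c)ᵀ = 1) ∧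
      ∀ G : Matrix (Fin n) (Fin n) ℝ, G.PosDef → ∑ c, logVol (α c) (Q c * G * (Q c)ᵀ) ≤ η) :
    ∃ Q : ι → Matrix (Fin n) (Fin n) ℝ, (∀ c, Q c * (Q c)ᵀ = 1) ∧
      ∀ G : Matrix (Fin n) (Fin n) ℝ, G.PosDef → ∑ c, logVol (α c) (Q c * G * (Q c)ᵀ) ≤ 0 := by
  choose! Q hQ hle using happrox
  have hpos : ∀ᶠ η : ℝ in 𝓝[>] 0, 0 < η := self_mem_nhdsWithin
  obtain ⟨Q₀, hQ₀, hcluster⟩ := (isCompact_univ_pi fun _ : ι =>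
    isCompact_setOf_mul_transpose_eq_one (m := Fin n)).exists_mapClusterPt
      (f := 𝓝[>] (0 : ℝ)) (u := Q) (tendsto_principal.mpr (hpos.mono fun η hη c _ => hQ η hη c))
  obtain ⟨F, hF, hlim⟩ := mapClusterPt_iff_ultrafilter.mp hcluster
  refine ⟨Q₀, fun c => hQ₀ c (Set.mem_univ c), fun G hG => ?_⟩
  have hcont : ContinuousAt (fun Q : ι → Matrix (Fin n) (Fin n) ℝ =>
      ∑ c, logVol (α c) (Q c * G * (Q c)ᵀ)) Q₀ := by
    refine tendsto_finsetSum _ fun c _ => ?_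
    have hdet : (Q₀ c).det ≠ 0 := det_ne_zero_of_right_inverse (hQ₀ c (Set.mem_univ c))
    have hconj : Continuous fun Q : ι → Matrix (Fin n) (Fin n) ℝ => Q c * G * (Q c)ᵀ :=
      ((continuous_apply c).matrix_mul continuous_const).matrix_mul
        (continuous_apply c).matrix_transpose
    exact (continuousAt_logVol (α c) fun k => (leadingMinor_pos
      (posDef_mul_mul_transpose hG hdet) k).ne').comp_of_eq hconj.continuousAt rfl
  exact le_of_tendsto_of_tendsto (hcont.tendsto.comp hlim)
    (tendsto_id.mono_left (hF.trans nhdsWithin_le_nhds))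
    (hF (hpos.mono fun η hη => hle η hη G hG))

end Optimal

/-! ### From unitary to orthogonal frames -/

section FirstOrder

variable {n : ℕ} {ι : Type*} [Fintype ι]

open Topology Filter in
lemma eventually_posDef_one_add_smul {m : Type*} [Finite m] [DecidableEq m] {M : Matrix m m ℝ}
    (hM : M.IsHermitian) : ∀ᶠ t : ℝ in 𝓝 0, (1 + t • M).PosDef := by
  have := Fintype.ofFinite m
  obtain ⟨V, hV, hdiag⟩ := exists_conjTranspose_mul_diagonal_mul hM
    (a := hM.eigenvalues) hM.charpoly_eq
  have hpos : ∀ᶠ t : ℝ in 𝓝 0, ∀ i, 0 < 1 + t * hM.eigenvalues i :=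
    eventually_all.mpr fun i =>
      (by fun_prop : ContinuousAt (fun t : ℝ => 1 + t * hM.eigenvalues i) 0).eventually
        (lt_mem_nhds (by simp))
  filter_upwards [hpos] with t ht
  have hconj : 1 + t • M = Vᴴ * diagonal (fun i => 1 + t * hM.eigenvalues i) * V := by
    have hadd : (diagonal fun i => 1 + t * hM.eigenvalues i) =
        1 + t • diagonal fun i => hM.eigenvalues i := by
      rw [← diagonal_one, ← diagonal_smul, diagonal_add]
      rfl
    rw [hadd, Matrix.mul_add, Matrix.add_mul, Matrix.mul_one, hV, Matrix.mul_smul, Matrix.smul_mul]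
    exact congrArg (fun N => 1 + t • N) hdiag
  rw [hconj]
  exact (IsUnit.posDef_star_left_conjugate_iff
    (IsUnit.of_mul_eq_one _ (mul_eq_one_comm.mp hV))).mpr (PosDef.diagonal ht)

lemma trace_sum_transpose_mul_diagonal_mul_mul {m R : Type*} [Fintype m] [DecidableEq m]
    [CommRing R] (α : ι → m → R) (Q : ι → Matrix m m R) (N : Matrix m m R) :
    ((∑ c, (Q c)ᵀ * diagonal (α c) * Q c) * N).trace =
      ∑ c, ∑ i, α c i * (Q c * N * (Q c)ᵀ) i i := by
  rw [Finset.sum_mul, trace_sum]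
  refine Finset.sum_congr rfl fun c _ => ?_
  calc ((Q c)ᵀ * diagonal (α c) * Q c * N).trace
      = (diagonal (α c) * (Q c * N * (Q c)ᵀ)).trace := by
        simp only [Matrix.mul_assoc]
        rw [trace_mul_comm]
        simp only [Matrix.mul_assoc]
    _ = ∑ i, α c i * (Q c * N * (Q c)ᵀ) i i := by
        simp only [trace, diag_apply, diagonal_mul]

lemma isSymm_transpose_mul_diagonal_mul {m R : Type*} [Fintype m] [DecidableEq m] [CommRing R]
    (Q : Matrix m m R) (a : m → R) : (Qᵀ * diagonal a * Q).IsSymm := by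
  simp [IsSymm, Matrix.mul_assoc]

lemma charpoly_transpose_mul_diagonal_mul {m R : Type*} [Fintype m] [DecidableEq m] [CommRing R]
    {Q : Matrix m m R} (hQ : Q * Qᵀ = 1) (a : m → R) :
    (Qᵀ * diagonal a * Q).charpoly = ∏ i, (Polynomial.X - Polynomial.C (a i)) := by
  rw [Matrix.mul_assoc, charpoly_mul_comm, Matrix.mul_assoc, hQ, Matrix.mul_one, charpoly_diagonal]

open Filter in
lemma sum_transpose_mul_diagonal_mul_eq_zero {α : ι → Fin n → ℝ}
    {Q : ι → Matrix (Fin n) (Fin n) ℝ} (hQ : ∀ c, Q c * (Q c)ᵀ = 1)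
    (hle : ∀ G : Matrix (Fin n) (Fin n) ℝ, G.PosDef →
      ∑ c, logVol (α c) (Q c * G * (Q c)ᵀ) ≤ 0) :
    ∑ c, (Q c)ᵀ * diagonal (α c) * Q c = 0 := by
  set M := ∑ c, (Q c)ᵀ * diagonal (α c) * Q c with hM_def
  have hM : Mᵀ = M := by
    rw [hM_def, transpose_sum]
    exact Finset.sum_congr rfl fun c _ => (isSymm_transpose_mul_diagonal_mul (Q c) (α c)).eq
  let f : ℝ → ℝ := fun t => ∑ c, logVol (α c) (1 + t • (Q c * M * (Q c)ᵀ))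
  have hf : ∀ t : ℝ, f t = ∑ c, logVol (α c) (Q c * (1 + t • M) * (Q c)ᵀ) := fun t => by
    simp only [f, Matrix.mul_add, Matrix.add_mul, Matrix.mul_one, hQ, Matrix.mul_smul,
      Matrix.smul_mul]
  have hmax : IsLocalMax f 0 := by
    filter_upwards [eventually_posDef_one_add_smul hM] with t ht
    have hf₀ : f 0 = 0 := by simp [f, logVol_one]
    rw [hf, hf₀]
    exact hle _ ht
  have hderiv : HasDerivAt f (M * M).trace 0 := by
    rw [hM_def, trace_sum_transpose_mul_diagonal_mul_mul, ← hM_def]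
    exact HasDerivAt.fun_sum fun c _ => hasDerivAt_logVol_one_add_smul (α c) _
  have htrace : (M * Mᴴ).trace = 0 := by
    rw [conjTranspose_eq_transpose_of_trivial, hM]
    exact hmax.hasDerivAt_eq_zero hderiv
  exact trace_mul_conjTranspose_self_eq_zero_iff.mp htrace

end FirstOrder

section Real

variable {ι : Type*} [Fintype ι] {𝕜 : Type*} [RCLike 𝕜]

theorem exists_orthogonal_sum_eq_zero_of_unitary {n : ℕ} {α : ι → Fin n → ℝ}
    (hα : ∀ c, Monotone (α c)) {X : ι → Matrix (Fin n) (Fin n) 𝕜} (hX : ∀ c, (X c)ᴴ * X c = 1)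
    (hsum : ∑ c, (X c)ᴴ * diagonal (fun i => (α c i : 𝕜)) * X c = 0) :
    ∃ Q : ι → Matrix (Fin n) (Fin n) ℝ, (∀ c, Q c * (Q c)ᵀ = 1) ∧
      ∑ c, (Q c)ᵀ * diagonal (α c) * Q c = 0 := by
  have htrace : ∑ c, ∑ i, α c i = 0 := by
    have h := congrArg trace hsum
    simp only [trace_sum, trace_mul_comm _ (X _), ← Matrix.mul_assoc, mul_eq_one_comm.mp (hX _),
      Matrix.one_mul, trace_diagonal, trace_zero] at h
    exact_mod_cast h
  obtain ⟨Y, hY, hss⟩ := exists_semistable_piKronecker_of_algebra (k := ℝ)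
    (κ := fun p : Fin (n + 1) => Leading n p) (fun _ c i => ∑ a, α c (i a)) X
    (fun c => det_ne_zero_of_left_inverse (hX c))
    fun _ => semistable_piKronecker_of_sum_eq_zero α X hX hsum
  obtain ⟨Q, hQ, hle⟩ := exists_orthogonal_sum_logVol_nonpos α fun η hη =>
    exists_orthogonal_sum_logVol_le α hY (exists_sum_logVol_le hα htrace hY hss) hη
  exact ⟨Q, hQ, sum_transpose_mul_diagonal_mul_eq_zero hQ hle⟩

theorem exists_isSymm_sum_eq_zero_of_isHermitian {m : Type*} [Fintype m] [DecidableEq m]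
    {α : ι → m → ℝ} {A : ι → Matrix m m 𝕜} (hA : ∀ c, (A c).IsHermitian)
    (hchar : ∀ c, (A c).charpoly = ∏ i, (Polynomial.X - Polynomial.C (α c i : 𝕜)))
    (hsum : ∑ c, A c = 0) :
    ∃ B : ι → Matrix m m ℝ, (∀ c, (B c).IsSymm) ∧
      (∀ c, (B c).charpoly = ∏ i, (Polynomial.X - Polynomial.C (α c i))) ∧ ∑ c, B c = 0 := by
  let e := Fintype.equivFin m
  let σ : ι → Fin (Fintype.card m) ≃ m := fun c => (Tuple.sort (α c ∘ e.symm)).trans e.symm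
  have hσ : ∀ c, Monotone (α c ∘ σ c) := fun c => Tuple.monotone_sort (α c ∘ e.symm)
  have hcharσ : ∀ c, (reindex e e (A c)).charpoly =
      ∏ i, (Polynomial.X - Polynomial.C ((α c ∘ σ c) i : 𝕜)) := fun c => by
    rw [charpoly_reindex, hchar]
    exact (Equiv.prod_comp (σ c) _).symm
  choose X hX hdiag using fun c =>
    exists_conjTranspose_mul_diagonal_mul ((hA c).submatrix e.symm) (hcharσ c)
  have hsumX : ∑ c, (X c)ᴴ * diagonal (fun i => ((α c ∘ σ c) i : 𝕜)) * X c = 0 := by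
    simp only [← hdiag]
    ext i j
    simpa [Matrix.sum_apply] using congrFun₂ hsum (e.symm i) (e.symm j)
  obtain ⟨Q, hQ, hzero⟩ := exists_orthogonal_sum_eq_zero_of_unitary hσ hX hsumX
  refine ⟨fun c => reindex e.symm e.symm ((Q c)ᵀ * diagonal (α c ∘ σ c) * Q c),
    fun c => (isSymm_transpose_mul_diagonal_mul _ _).submatrix e, fun c => ?_, ?_⟩
  · rw [charpoly_reindex, charpoly_transpose_mul_diagonal_mul (hQ c)]
    exact Equiv.prod_comp (σ c) fun i => Polynomial.X - Polynomial.C (α c i)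
  · ext i j
    simpa [Matrix.sum_apply] using congrFun₂ hzero (e i) (e j)

end Real

/-! ### Sums of matrices with prescribed spectra -/

section Spectra

open Polynomial

lemma charpoly_neg_eq_prod {m R : Type*} [Fintype m] [DecidableEq m] [CommRing R]
    {A : Matrix m m R} {a : m → R} (hA : A.charpoly = ∏ i, (X - C (a i))) :
    (-A).charpoly = ∏ i, (X - C (-a i)) := by
  have hcharmatrix : charmatrix (-A) = -(compRingHom (-X)).mapMatrix (charmatrix A) := by
    ext1 i j
    by_cases hij : i = j
    · subst hij
      simp [charmatrix_apply_eq, add_comm]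
    · simp [charmatrix_apply_ne _ _ _ hij]
  calc (-A).charpoly
      = (-1) ^ Fintype.card m * compRingHom (-X) A.charpoly := by
        rw [charpoly, hcharmatrix, det_neg, charpoly, RingHom.map_det]
    _ = ∏ i, (-1) * compRingHom (-X) (X - C (a i)) := by
        rw [hA, map_prod, Finset.prod_mul_distrib, Finset.prod_const, Finset.card_univ]
    _ = ∏ i, (X - C (-a i)) := Finset.prod_congr rfl fun i _ => by simp [add_comm]

lemma charpoly_map_eq_prod {m R S : Type*} [Fintype m] [DecidableEq m] [CommRing R]
    [CommRing S] (f : R →+* S) {A : Matrix m m R} {a : m → R}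
    (hA : A.charpoly = ∏ i, (X - C (a i))) :
    (A.map f).charpoly = ∏ i, (X - C (f (a i))) := by
  rw [charpoly_map, hA, Polynomial.map_prod]
  simp only [Polynomial.map_sub, map_X, map_C]

theorem stmt9_general {ι m 𝕜 : Type*} [Fintype ι] [Fintype m] [DecidableEq m] [RCLike 𝕜]
    (lam : ι → m → ℝ) (nu : m → ℝ) :
    (∃ A : ι → Matrix m m 𝕜, (∀ c, (A c).IsHermitian) ∧
      (∀ c, (A c).charpoly = ∏ i, (X - C (lam c i : 𝕜))) ∧
      (∑ c, A c).charpoly = ∏ i, (X - C (nu i : 𝕜))) ↔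
    (∃ A : ι → Matrix m m ℝ, (∀ c, (A c).IsSymm) ∧
      (∀ c, (A c).charpoly = ∏ i, (X - C (lam c i))) ∧
      (∑ c, A c).charpoly = ∏ i, (X - C (nu i))) := by
  constructor
  · rintro ⟨A, hA, hlam, hnu⟩
    obtain ⟨B, hB, hchar, hsum⟩ := exists_isSymm_sum_eq_zero_of_isHermitian
      (α := fun o : Option ι => o.elim (-nu) lam) (A := fun o => o.elim (-∑ c, A c) A)
      (Option.forall.mpr ⟨IsHermitian.neg (isSelfAdjoint_sum _ fun c _ => hA c), hA⟩)
      (Option.forall.mpr ⟨by simpa using charpoly_neg_eq_prod hnu, hlam⟩)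
      (by simp [Fintype.sum_option])
    have hB_none : ∑ c, B (some c) = -B none :=
      (neg_eq_of_add_eq_zero_right (by rwa [Fintype.sum_option] at hsum)).symm
    refine ⟨fun c => B (some c), fun c => hB _, fun c => hchar _, ?_⟩
    rw [hB_none]
    simpa using charpoly_neg_eq_prod (hchar none)
  · rintro ⟨A, hA, hlam, hnu⟩
    refine ⟨fun c => (A c).map (algebraMap ℝ 𝕜), fun c => ?_,
      fun c => charpoly_map_eq_prod _ (hlam c), ?_⟩
    · ext i j
      simp [(hA c).apply i j]
    · simpa only [← RingHom.mapMatrix_apply, map_sum] using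
        charpoly_map_eq_prod (algebraMap ℝ 𝕜) hnu

end Spectra

/-- For weakly decreasing `λ, μ, ν ∈ ℝⁿ`, there exist complex Hermitian
matrices `A, B` with `spec A = λ`, `spec B = μ`, `spec (A+B) = ν` if and only if there exist
real symmetric matrices with the same property.  (Here `spec A = λ` is expressed by the
characteristic polynomial being `∏ (X − λᵢ)`, i.e. the eigenvalues with multiplicity are
exactly the `λᵢ`.) -/
theorem stmt9 (n : ℕ) (hn : 1 ≤ n) (lam mu nu : Fin n → ℝ)
    (hlam : Antitone lam) (hmu : Antitone mu) (hnu : Antitone nu) :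
    (∃ A B : Matrix (Fin n) (Fin n) ℂ, A.IsHermitian ∧ B.IsHermitian ∧
      A.charpoly = ∏ i : Fin n, (Polynomial.X - Polynomial.C (lam i : ℂ)) ∧
      B.charpoly = ∏ i : Fin n, (Polynomial.X - Polynomial.C (mu i : ℂ)) ∧
      (A + B).charpoly = ∏ i : Fin n, (Polynomial.X - Polynomial.C (nu i : ℂ))) ↔
    (∃ A B : Matrix (Fin n) (Fin n) ℝ, A.IsSymm ∧ B.IsSymm ∧
      A.charpoly = ∏ i : Fin n, (Polynomial.X - Polynomial.C (lam i)) ∧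
      B.charpoly = ∏ i : Fin n, (Polynomial.X - Polynomial.C (mu i)) ∧
      (A + B).charpoly = ∏ i : Fin n, (Polynomial.X - Polynomial.C (nu i))) := by
  simpa [Fin.exists_fin_succ_pi, Fin.forall_fin_two, and_assoc] using
    stmt9_general (𝕜 := ℂ) ![lam, mu] nu
end
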